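/- arXiv:2412.18704 — 13 statements merged into one kernel-verified Lean document; each statement's English description precedes it below -/
import Mathlib

section
/- For every natural number n ≥ 2 there exists a countably infinite set D ⊆ ℚ^n that is dense in ℚ^n with respect to the product topology and such that any two distinct points of D differ in every coordinate (i.e., no two distinct points of D share a coordinate). -/
noncomputable def seqAux (g : ℕ → Finset ℚ → ℚ) : ℕ → ℚ
  | m => g m (Finset.univ.image (fun j : Fin m => seqAux g j.1))
termination_by m => m
decreasing_by exact j.2

lemma exists_inj_close (q e : ℕ → ℚ) (he : ∀ m, 0 < e m) :
    ∃ f : ℕ → ℚ, Function.Injective f ∧ ∀ m, q m < f m ∧ f m < q m + e m := by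
  have h : ∀ (m : ℕ) (s : Finset ℚ), ∃ x : ℚ, x ∉ s ∧ q m < x ∧ x < q m + e m := by
    intro m s
    have hi : (Set.Ioo (q m) (q m + e m)).Infinite :=
      Set.Ioo_infinite (by linarith [he m])
    obtain ⟨x, hx, hs⟩ := hi.exists_notMem_finset s
    exact ⟨x, hs, hx.1, hx.2⟩
  choose g hg1 hg2 using h
  have hne : ∀ a b : ℕ, a < b → seqAux g a ≠ seqAux g b := by
    intro a b hab heq
    have h1 := hg1 b (Finset.univ.image (fun j : Fin b => seqAux g j.1))
    rw [seqAux.eq_1 g b] at heq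
    rw [← heq] at h1
    exact h1 (Finset.mem_image.2 ⟨⟨a, hab⟩, Finset.mem_univ _, rfl⟩)
  refine ⟨seqAux g, ?_, ?_⟩
  · intro a b hab
    rcases lt_trichotomy a b with h | h | h
    · exact absurd hab (hne a b h)
    · exact h
    · exact absurd hab.symm (hne b a h)
  · intro m
    rw [seqAux]
    exact hg2 m _

/-- For every natural number `n ≥ 2` there exists a countably infinite set
`D ⊆ ℚ^n` that is dense in `ℚ^n` with respect to the product topology and such that any
two distinct points of `D` differ in every coordinate. -/
theorem stmt_0 (n : ℕ) (hn : 2 ≤ n) :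
    ∃ D : Set (Fin n → ℚ), D.Countable ∧ D.Infinite ∧ Dense D ∧
      ∀ a ∈ D, ∀ b ∈ D, a ≠ b → ∀ i : Fin n, a i ≠ b i := by
  obtain ⟨e, he⟩ := exists_surjective_nat ((Fin n → ℚ) × ℕ)
  have h : ∀ i : Fin n, ∃ f : ℕ → ℚ, Function.Injective f ∧
      ∀ m, (e m).1 i < f m ∧ f m < (e m).1 i + 1 / (((e m).2 : ℚ) + 1) := fun i =>
    exists_inj_close (fun m => (e m).1 i) (fun m => 1 / (((e m).2 : ℚ) + 1))
      (fun m => by positivity)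
  choose f hinj hf using h
  refine ⟨Set.range (fun m i => f i m), Set.countable_range _, ?_, ?_, ?_⟩
  · apply Set.infinite_range_of_injective
    intro a b hab
    exact hinj ⟨0, by omega⟩ (congrFun hab ⟨0, by omega⟩)
  · rw [Metric.dense_iff]
    intro x r hr
    obtain ⟨k, hk⟩ := exists_nat_one_div_lt hr
    obtain ⟨m, hm⟩ := he (x, k)
    refine ⟨fun i => f i m, ?_, m, rfl⟩
    rw [Metric.mem_ball, dist_pi_lt_iff hr]
    intro i
    have h1 := hf i m
    simp only [hm] at h1
    obtain ⟨h2, h3⟩ := h1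
    have h2' : (x i : ℝ) < f i m := by exact_mod_cast h2
    have h3' : (f i m : ℝ) < x i + 1 / ((k : ℝ) + 1) := by
      have h4 := (Rat.cast_lt (K := ℝ)).2 h3
      push_cast at h4
      exact h4
    rw [Rat.dist_eq, abs_lt]
    constructor <;> linarith
  · rintro _ ⟨a, rfl⟩ _ ⟨b, rfl⟩ hab i heq
    apply hab
    rw [hinj i heq]
end

section
/- For every n ≥ 2, the class of finite partial orders of dimension at most n fails the amalgamation property: there exist finite partial orders (A,<), (B,<), (C,<), each of dimension at most n, and order embeddings e : A → B and f : A → C, such that there is no finite partial order (D,<) of dimension at most n admitting order embeddings g : B → D and h : C → D with g ∘ e = h ∘ f. -/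
/-- A strict partial order `r` on `α` has dimension at most `n` if there are `n` strict
linear orders on `α` whose intersection is `r`. -/
def HasDimLE (n : ℕ) {α : Type} (r : α → α → Prop) : Prop :=
  ∃ L : Fin n → α → α → Prop, (∀ i, IsStrictTotalOrder α (L i)) ∧
    ∀ a b : α, r a b ↔ ∀ i, L i a b

/-- An order embedding between (strict) partial orders: an injection which preserves and
reflects the order. -/
def IsOrdEmbedding {α β : Type} (r : α → α → Prop) (s : β → β → Prop) (f : α → β) : Prop :=
  Function.Injective f ∧ ∀ a b : α, r a b ↔ s (f a) (f b)

/-- The order on the standard example with one maximal point removed: minimal points indexed by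
`Option (Fin n)`, maximal points indexed by `Fin n`. -/
def rP (n : ℕ) : (Option (Fin n) ⊕ Fin n) → (Option (Fin n) ⊕ Fin n) → Prop
  | .inl o, .inr j => o ≠ some j
  | _, _ => False

/-- Key function for the `i`-th linear order of the realizer. -/
def keyP (n : ℕ) (i : Fin n) : (Option (Fin n) ⊕ Fin n) → ℕ
  | .inl none => n
  | .inl (some j) => if j = i then n + 2 else j
  | .inr j => if j = i then n + 1 else n + 3 + j

theorem keyP_inj (n : ℕ) (i : Fin n) : Function.Injective (keyP n i) := by
  rintro ((_ | j) | j) ((_ | k) | k) h <;> simp only [keyP] at h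
  · rfl
  · have := k.2; split_ifs at h <;> omega
  · split_ifs at h <;> omega
  · have := j.2; split_ifs at h <;> omega
  · have := j.2
    have := k.2
    have : j = k := by split_ifs at h <;> omega
    rw [this]
  · have := j.2; split_ifs at h <;> omega
  · split_ifs at h <;> omega
  · have := k.2; split_ifs at h <;> omega
  · have : j = k := by split_ifs at h <;> omega
    rw [this]

theorem sto_of_key {α : Type} (k : α → ℕ) (hk : Function.Injective k) :
    IsStrictTotalOrder α (fun a b => k a < k b) where
  trichotomous a b h1 h2 := hk (by omega)
  irrefl a := lt_irrefl _
  trans a b c := lt_trans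

theorem rP_iff (n : ℕ) (hn : 2 ≤ n) (p q : Option (Fin n) ⊕ Fin n) :
    rP n p q ↔ ∀ i, keyP n i p < keyP n i q := by
  have hne : ∀ j : Fin n, ∃ i : Fin n, j ≠ i := by
    intro j
    have : Nontrivial (Fin n) := Fin.nontrivial_iff_two_le.2 hn
    obtain ⟨i, hi⟩ := exists_ne j
    exact ⟨i, hi.symm⟩
  rcases p with (_ | j) | j <;> rcases q with (_ | k) | k <;> simp only [rP, keyP]
  · simp only [false_iff]; intro h; have := h ⟨0, by omega⟩; omega
  · obtain ⟨i, hi⟩ := hne k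
    simp only [false_iff]; intro h; have := h i; rw [if_neg hi] at this; omega
  · simp only [ne_eq, reduceCtorEq, not_false_eq_true, true_iff]
    intro i; split_ifs <;> omega
  · simp only [false_iff]; intro h; have := h j; simp at this
  · simp only [false_iff]; intro h
    have := h j; simp at this
    split_ifs at this <;> omega
  · constructor
    · intro h i
      have hjk : j ≠ k := fun e => h (by rw [e])
      have := j.2
      split_ifs with h1 h2
      · exact absurd (h1.trans h2.symm) hjk
      all_goals omega
    · rintro h e
      have e : j = k := by simpa using e
      subst e
      have := h j; simp at this
  · simp only [false_iff]; intro h; have := h j; simp at this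
  · simp only [false_iff]; intro h
    obtain ⟨i, hi⟩ := hne k
    have h3 := h i
    rw [if_neg hi] at h3
    have := k.2
    split_ifs at h3 <;> omega
  · simp only [false_iff]; intro h
    have := h k; simp at this
    split_ifs at this <;> omega

theorem rP_strict (n : ℕ) : IsStrictOrder _ (rP n) where
  irrefl := by rintro (a | a) h <;> exact h
  trans := by
    rintro (a | a) (b | b) (c | c) h1 h2 <;> simp_all [rP]

theorem stmt_1 (n : ℕ) (hn : 2 ≤ n) :
    ∃ (A B C : Type) (_ : Fintype A) (_ : Fintype B) (_ : Fintype C)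
      (rA : A → A → Prop) (rB : B → B → Prop) (rC : C → C → Prop),
      IsStrictOrder A rA ∧ IsStrictOrder B rB ∧ IsStrictOrder C rC ∧
      HasDimLE n rA ∧ HasDimLE n rB ∧ HasDimLE n rC ∧
      ∃ (e : A → B) (f : A → C),
        IsOrdEmbedding rA rB e ∧ IsOrdEmbedding rA rC f ∧
        ¬ ∃ (E : Type) (_ : Fintype E) (rE : E → E → Prop),
            IsStrictOrder E rE ∧ HasDimLE n rE ∧
            ∃ (g : B → E) (h : C → E),
              IsOrdEmbedding rB rE g ∧ IsOrdEmbedding rC rE h ∧ g ∘ e = h ∘ f := by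
  let z : Fin n := ⟨0, by omega⟩
  have hP : HasDimLE n (rP n) :=
    ⟨fun i a b => keyP n i a < keyP n i b, fun i => sto_of_key _ (keyP_inj n i), rP_iff n hn⟩
  let s : Option (Fin n) ≃ Option (Fin n) := Equiv.swap none (some z)
  refine ⟨{p : Option (Fin n) ⊕ Fin n // p ≠ .inr z}, Option (Fin n) ⊕ Fin n,
    Option (Fin n) ⊕ Fin n, inferInstance, inferInstance, inferInstance,
    fun a b => rP n a.1 b.1, rP n, rP n, ?_, rP_strict n, rP_strict n, ?_, hP, hP,
    fun a => a.1, fun a => Sum.map s id a.1, ?_, ?_, ?_⟩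
  · exact { irrefl := fun a => (rP_strict n).irrefl a.1,
            trans := fun a b c => (rP_strict n).trans a.1 b.1 c.1 }
  · exact ⟨fun i a b => keyP n i a.1 < keyP n i b.1,
      fun i => sto_of_key (fun a : {p : Option (Fin n) ⊕ Fin n // p ≠ .inr z} => keyP n i a.1)
        ((keyP_inj n i).comp Subtype.val_injective),
      fun a b => rP_iff n hn a.1 b.1⟩
  · exact ⟨Subtype.val_injective, fun _ _ => Iff.rfl⟩
  · refine ⟨(Sum.map_injective.2 ⟨s.injective, Function.injective_id⟩).comp
      Subtype.val_injective, ?_⟩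
    rintro ⟨a | a, ha⟩ ⟨b | b, hb⟩ <;> simp only [rP, Sum.map_inl, Sum.map_inr, id]
    have hbz : b ≠ z := fun e => hb (by rw [e])
    have : s (some b) = some b :=
      Equiv.swap_apply_of_ne_of_ne (by simp) (by simpa using hbz)
    rw [not_iff_not]
    constructor
    · intro h; rw [h, this]
    · intro h; exact s.injective (h.trans this.symm)
  · rintro ⟨E, _, rE, hE, ⟨L, hL, hrL⟩, g, h, hg, hh, hgh⟩
    let β : Option (Fin n) → E := fun o => o.elim (h (.inr z)) (fun j => g (.inr j))
    have key : ∀ o p, rE (g (.inl o)) (β p) ↔ o ≠ p := by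
      intro o p
      rcases p with _ | j
      · have h1 : g (.inl o) = h (.inl (s o)) := congrFun hgh ⟨.inl o, by simp⟩
        change rE (g (.inl o)) (h (.inr z)) ↔ _
        rw [h1, ← hh.2]
        have h2 : s none = some z := Equiv.swap_apply_left _ _
        change s o ≠ some z ↔ _
        rw [← h2, s.injective.ne_iff]
      · exact (hg.2 _ _).symm
    have hex : ∀ o, ∃ i, ¬ L i (g (.inl o)) (β o) := by
      intro o
      have := (key o o).not.2 (by simp)
      rw [hrL] at this
      exact not_forall.1 this
    choose i hi using hex
    obtain ⟨o, p, hop, hip⟩ := Fintype.exists_ne_map_eq_of_card_lt i (by simp)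
    have hip' := hi p
    rw [← hip] at hip'
    have h1 := (hrL _ _).1 ((key o p).2 hop) (i o)
    have h2 := (hrL _ _).1 ((key p o).2 hop.symm) (i o)
    have T := hL (i o)
    have tr : ∀ {x y w}, L (i o) x y → ¬ L (i o) w y → L (i o) x w := by
      intro x y w hxy hwy
      by_contra hxw
      by_cases hwx : L (i o) w x
      · exact hwy (T.trans _ _ _ hwx hxy)
      · have := T.trichotomous _ _ hxw hwx
        subst this; exact hwy hxy
    exact hi o (T.trans _ _ _ (tr h1 hip') h2)
end

section
/- Let n ≥ 2 and let D ⊆ ℚ^n be a Manaster–Remmel set, with < the restriction to D of the product order on ℚ^n. Then (D,<) is not 3-homogeneous: there exist three-element subsets S, T ⊆ D and an order isomorphism f : (S,<) → (T,<) that does not extend to any automorphism of (D,<). In particular, (D,<) is not ultrahomogeneous. -/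
/-- `D ⊆ ℚ^n` is a Manaster–Remmel set: dense in the product topology, and any two
distinct points of `D` differ in every coordinate. -/
def MRSet (n : ℕ) (D : Set (Fin n → ℚ)) : Prop :=
  Dense D ∧ ∀ a ∈ D, ∀ b ∈ D, a ≠ b → ∀ i : Fin n, a i ≠ b i

/-- The product (coordinatewise) strict order on `ℚ^n`. -/
def ProdLt {n : ℕ} (a b : Fin n → ℚ) : Prop :=
  (∀ i, a i ≤ b i) ∧ a ≠ b

theorem dense_box {n : ℕ} {D : Set (Fin n → ℚ)} (hD : Dense D) (u : Fin n → ℚ) :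
    ∃ d ∈ D, ∀ i, u i - 1 < d i ∧ d i < u i + 1 := by
  have ho : IsOpen (Set.pi Set.univ (fun i => Set.Ioo (u i - 1) (u i + 1))) :=
    isOpen_set_pi Set.finite_univ (fun i _ => isOpen_Ioo)
  obtain ⟨d, hd, hdD⟩ := hD.inter_open_nonempty _ ho ⟨u, fun i _ => by
    constructor <;> linarith⟩
  exact ⟨d, hdD, fun i => hd i (Set.mem_univ i)⟩

/-- `(D,<)` is not 3-homogeneous: there are three-element subsets `S, T ⊆ D`
and an order isomorphism `f : (S,<) → (T,<)` that does not extend to any automorphism of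
`(D,<)`. -/
theorem stmt_2 (n : ℕ) (hn : 2 ≤ n) (D : Set (Fin n → ℚ)) (hD : MRSet n D) :
    ∃ S T : Set (Fin n → ℚ), S ⊆ D ∧ T ⊆ D ∧ S.ncard = 3 ∧ T.ncard = 3 ∧
      ∃ f : (Fin n → ℚ) → (Fin n → ℚ), Set.BijOn f S T ∧
        (∀ a ∈ S, ∀ b ∈ S, ProdLt a b ↔ ProdLt (f a) (f b)) ∧
        ¬ ∃ g : (Fin n → ℚ) → (Fin n → ℚ), Set.BijOn g D D ∧
            (∀ a ∈ D, ∀ b ∈ D, (ProdLt a b ↔ ProdLt (g a) (g b))) ∧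
            ∀ a ∈ S, g a = f a := by
  obtain ⟨hd, -⟩ := hD
  let i0 : Fin n := ⟨0, by omega⟩
  let i1 : Fin n := ⟨1, by omega⟩
  have h10 : i1 ≠ i0 := by simp [i0, i1, Fin.ext_iff]
  obtain ⟨a, haD, ha⟩ := dense_box hd (fun i => if i = i0 then 0 else 20)
  obtain ⟨b, hbD, hb⟩ := dense_box hd (fun i => if i = i0 then 20 else 0)
  obtain ⟨c, hcD, hc⟩ := dense_box hd (fun _ => 10)
  obtain ⟨x, hxD, hx⟩ := dense_box hd (fun i => if i = i0 then 15 else 30)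
  have a0 := ha i0
  have b0 := hb i0
  have c0 := hc i0
  have x0 := hx i0
  have a1 := ha i1
  have b1 := hb i1
  have c1 := hc i1
  simp only [if_true, if_neg h10] at a0 b0 c0 x0 a1 b1 c1
  have ne (u v : Fin n → ℚ) (i : Fin n) (h : u i < v i) : u ≠ v := by
    rintro rfl; exact lt_irrefl _ h
  have nlt (u v : Fin n → ℚ) (i : Fin n) (h : v i < u i) : ¬ ProdLt u v :=
    fun hl => absurd (hl.1 i) (not_le.2 h)
  have irr (u : Fin n → ℚ) : ¬ ProdLt u u := fun h => h.2 rfl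
  have hab : a ≠ b := ne _ _ i0 (by linarith)
  have hac : a ≠ c := ne _ _ i0 (by linarith)
  have hcb : c ≠ b := ne _ _ i0 (by linarith)
  have nab : ¬ ProdLt a b := nlt _ _ i1 (by linarith)
  have nba : ¬ ProdLt b a := nlt _ _ i0 (by linarith)
  have nac : ¬ ProdLt a c := nlt _ _ i1 (by linarith)
  have nca : ¬ ProdLt c a := nlt _ _ i0 (by linarith)
  have nbc : ¬ ProdLt b c := nlt _ _ i0 (by linarith)
  have ncb : ¬ ProdLt c b := nlt _ _ i1 (by linarith)
  have nbx : ¬ ProdLt b x := nlt _ _ i0 (by linarith)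
  have hax : ProdLt a x := by
    refine ⟨fun i => ?_, ne _ _ i0 (by linarith)⟩
    have h1 := ha i
    have h2 := hx i
    split_ifs at h1 h2 <;> linarith
  have hcx : ProdLt c x := by
    refine ⟨fun i => ?_, ne _ _ i0 (by linarith)⟩
    have h1 := hc i
    have h2 := hx i
    split_ifs at h2 <;> linarith
  have key (y : Fin n → ℚ) (h1 : ProdLt a y) (h2 : ProdLt b y) : ProdLt c y := by
    refine ⟨fun i => ?_, ?_⟩
    · have h3 := h1.1 i
      have h4 := h2.1 i
      have h5 := ha i
      have h6 := hb i
      have h7 := hc i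
      split_ifs at h5 h6 <;> linarith
    · rintro rfl
      exact nbc h2
  have hS : ({a, b, c} : Set (Fin n → ℚ)) ⊆ D := by
    rintro z (rfl | rfl | rfl) <;> assumption
  have hcard : ({a, b, c} : Set (Fin n → ℚ)).ncard = 3 :=
    Set.ncard_eq_three.2 ⟨a, b, c, hab, hac, hcb.symm, rfl⟩
  have fa : Equiv.swap b c a = a := Equiv.swap_apply_of_ne_of_ne hab hac
  have fb : Equiv.swap b c b = c := Equiv.swap_apply_left _ _
  have fc : Equiv.swap b c c = b := Equiv.swap_apply_right _ _
  refine ⟨{a, b, c}, {a, b, c}, hS, hS, hcard, hcard, Equiv.swap b c, ⟨?_, ?_, ?_⟩, ?_, ?_⟩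
  · rintro z (rfl | rfl | rfl)
    · rw [fa]; simp
    · rw [fb]; simp
    · rw [fc]; simp
  · exact (Equiv.injective _).injOn
  · rintro z (rfl | rfl | rfl)
    · exact ⟨_, by simp, fa⟩
    · exact ⟨c, by simp, fc⟩
    · exact ⟨b, by simp, fb⟩
  · intro u hu v hv
    have hn (u v : Fin n → ℚ) (hu : u = a ∨ u = b ∨ u = c) (hv : v = a ∨ v = b ∨ v = c) :
        ¬ ProdLt u v := by
      rcases hu with hu | hu | hu <;> rcases hv with hv | hv | hv <;> rw [hu, hv] <;>
        first | assumption | exact irr _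
    have hf (u : Fin n → ℚ) (hu : u = a ∨ u = b ∨ u = c) :
        Equiv.swap b c u = a ∨ Equiv.swap b c u = b ∨ Equiv.swap b c u = c := by
      rcases hu with hu | hu | hu <;> rw [hu]
      · exact Or.inl fa
      · exact Or.inr (Or.inr fb)
      · exact Or.inr (Or.inl fc)
    exact iff_of_false (hn u v hu hv) (hn _ _ (hf u hu) (hf v hv))
  · rintro ⟨g, hg, hgo, hgf⟩
    have ga : g a = a := (hgf a (by simp)).trans fa
    have gb : g b = c := (hgf b (by simp)).trans fb
    have gc : g c = b := (hgf c (by simp)).trans fc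
    obtain ⟨y, hyD, rfl⟩ := hg.surjOn hxD
    have h1 : ProdLt a y := (hgo a haD y hyD).2 (by rw [ga]; exact hax)
    have h2 : ProdLt b y := (hgo b hbD y hyD).2 (by rw [gb]; exact hcx)
    have h3 := (hgo c hcD y hyD).1 (key y h1 h2)
    rw [gc] at h3
    exact nbx h3
end

section
/- Let n ≥ 2 and let D ⊆ ℚ^n be a Manaster–Remmel set with coordinate orders <_1,...,<_n. Let Q be a finite set equipped with n linear orders <_1,...,<_n, let P ⊆ Q carry the induced orders, and let f : P → D be an injection with p <_i q iff f(p) <_i f(q) for all i ≤ n and p, q ∈ P. Then f extends to an injection g : Q → D with p <_i q iff g(p) <_i g(q) for all i ≤ n and p, q ∈ Q. -/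
/-- an embedding (with respect to the `n` linear orders) of a subset `P` of a
finite set `Q` carrying `n` linear orders into a Manaster–Remmel set `D` with its `n`
coordinate orders extends to an embedding of all of `Q` into `D`. -/
theorem stmt_3 (n : ℕ) (hn : 2 ≤ n) (D : Set (Fin n → ℚ)) (hD : MRSet n D)
    (Q : Type) [Fintype Q] (L : Fin n → Q → Q → Prop)
    (hL : ∀ i, IsStrictTotalOrder Q (L i))
    (P : Set Q) (f : Q → (Fin n → ℚ))
    (hfD : ∀ p ∈ P, f p ∈ D)
    (hfinj : Set.InjOn f P)
    (hf : ∀ i : Fin n, ∀ p ∈ P, ∀ q ∈ P, L i p q ↔ f p i < f q i) :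
    ∃ g : Q → (Fin n → ℚ), (∀ q, g q ∈ D) ∧ Function.Injective g ∧
      (∀ p ∈ P, g p = f p) ∧
      ∀ i : Fin n, ∀ p q : Q, L i p q ↔ g p i < g q i := by
  classical
  have key : ∀ T : Finset Q, ∃ g : Q → (Fin n → ℚ), (∀ p ∈ P, g p = f p) ∧
      (∀ q, q ∈ P ∨ q ∈ T → g q ∈ D) ∧
      ∀ i : Fin n, ∀ p q : Q, (p ∈ P ∨ p ∈ T) → (q ∈ P ∨ q ∈ T) →
        (L i p q ↔ g p i < g q i) := by
    intro T
    induction T using Finset.induction_on with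
    | empty =>
      refine ⟨f, fun _ _ => rfl, ?_, ?_⟩
      · intro q hq
        exact hfD q (by simpa using hq)
      · intro i p q hp hq
        exact hf i p (by simpa using hp) q (by simpa using hq)
    | insert x T hx ih =>
      obtain ⟨g, hg1, hg2, hg3⟩ := ih
      by_cases hxP : x ∈ P
      · have e : ∀ q, (q ∈ P ∨ q ∈ insert x T) → (q ∈ P ∨ q ∈ T) := by
          intro q hq
          rw [Finset.mem_insert] at hq
          rcases hq with h | rfl | h
          · exact Or.inl h
          · exact Or.inl hxP
          · exact Or.inr h
        exact ⟨g, hg1, fun q hq => hg2 q (e q hq),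
          fun i p q hp hq => hg3 i p q (e p hp) (e q hq)⟩
      have hm : ∀ i, ∃ m : ℚ, ∀ p, (p ∈ P ∨ p ∈ T) →
          (L i p x → g p i < m) ∧ (L i x p → m < g p i) := by
        intro i
        have := hL i
        obtain ⟨m, h1, h2⟩ := Order.exists_between_finsets
          (lo := (Finset.univ.filter (fun p => (p ∈ P ∨ p ∈ T) ∧ L i p x)).image (fun p => g p i))
          (hi := (Finset.univ.filter (fun p => (p ∈ P ∨ p ∈ T) ∧ L i x p)).image (fun p => g p i))
          (by
            simp only [Finset.mem_image, Finset.mem_filter, Finset.mem_univ, true_and]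
            rintro _ ⟨p, ⟨hp, hpx⟩, rfl⟩ _ ⟨q, ⟨hq, hxq⟩, rfl⟩
            exact (hg3 i p q hp hq).1 (_root_.trans hpx hxq))
        simp only [Finset.mem_image, Finset.mem_filter, Finset.mem_univ, true_and] at h1 h2
        exact ⟨m, fun p hp => ⟨fun h => h1 _ ⟨p, ⟨hp, h⟩, rfl⟩, fun h => h2 _ ⟨p, ⟨hp, h⟩, rfl⟩⟩⟩
      choose m hm using hm
      have hopen : IsOpen {v : Fin n → ℚ | ∀ i, ∀ p, (p ∈ P ∨ p ∈ T) →
          (L i p x → g p i < v i) ∧ (L i x p → v i < g p i)} := by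
        simp only [Set.ofPred_forall, Set.ofPred_and]
        refine isOpen_iInter_of_finite fun i => isOpen_iInter_of_finite fun p =>
          isOpen_iInter_of_finite fun _ => IsOpen.inter ?_ ?_
        · exact isOpen_iInter_of_finite fun _ => isOpen_lt continuous_const (continuous_apply i)
        · exact isOpen_iInter_of_finite fun _ => isOpen_lt (continuous_apply i) continuous_const
      obtain ⟨v, hvD, hv⟩ := hD.1.exists_mem_open hopen ⟨m, hm⟩
      have hne : ∀ p, (p ∈ P ∨ p ∈ T) → p ≠ x := by
        rintro p hp rfl
        exact hp.elim hxP hx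
      have e : ∀ q, (q ∈ P ∨ q ∈ insert x T) → q = x ∨ (q ∈ P ∨ q ∈ T) := by
        intro q hq
        rw [Finset.mem_insert] at hq
        tauto
      refine ⟨Function.update g x v, ?_, ?_, ?_⟩
      · intro p hp
        rw [Function.update_of_ne (hne p (Or.inl hp)), hg1 p hp]
      · intro q hq
        rcases e q hq with rfl | hq
        · simpa using hvD
        · rw [Function.update_of_ne (hne q hq)]
          exact hg2 q hq
      · intro i p q hp hq
        have := hL i
        have hp' := e p hp
        have hq' := e q hq
        clear hp hq
        rcases hp' with rfl | hp <;> rcases hq' with rfl | hq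
        · simp only [lt_irrefl, iff_false]
          exact irrefl _
        · rw [Function.update_of_ne (hne q hq), Function.update_self]
          refine ⟨(hv i q hq).2, fun h => ?_⟩
          rcases trichotomous_of (L i) p q with h' | h' | h'
          · exact h'
          · exact absurd h'.symm (hne q hq)
          · exact absurd h ((hv i q hq).1 h').not_gt
        · rw [Function.update_of_ne (hne p hp), Function.update_self]
          refine ⟨(hv i p hp).1, fun h => ?_⟩
          rcases trichotomous_of (L i) p q with h' | h' | h'
          · exact h'
          · exact absurd h' (hne p hp)
          · exact absurd h ((hv i p hp).2 h').not_gt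
        · rw [Function.update_of_ne (hne p hp), Function.update_of_ne (hne q hq)]
          exact hg3 i p q hp hq
  obtain ⟨g, h1, h2, h3⟩ := key Finset.univ
  have h3' : ∀ i : Fin n, ∀ p q : Q, L i p q ↔ g p i < g q i := fun i p q =>
    h3 i p q (Or.inr (Finset.mem_univ _)) (Or.inr (Finset.mem_univ _))
  refine ⟨g, fun q => h2 q (Or.inr (Finset.mem_univ _)), ?_, h1, h3'⟩
  intro p q hpq
  have := hL ⟨0, by omega⟩
  rcases trichotomous_of (L ⟨0, by omega⟩) p q with h' | h' | h'
  · rw [h3', hpq] at h'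
    exact absurd h' (lt_irrefl _)
  · exact h'
  · rw [h3', hpq] at h'
    exact absurd h' (lt_irrefl _)
end

section
/- Let n ≥ 2 and let D ⊆ ℚ^n be a Manaster–Remmel set with coordinate orders <_1,...,<_n. Then the structure (D, <_1,...,<_n) is ultrahomogeneous: for any finite subsets P, Q ⊆ D and any bijection f : P → Q with p <_i q iff f(p) <_i f(q) for all i ≤ n and p, q ∈ P, there exists a bijection g : D → D with a <_i b iff g(a) <_i g(b) for all i ≤ n and a, b ∈ D, such that g extends f. -/
theorem mr_ext {n : ℕ} {D : Set (Fin n → ℚ)} (hD : MRSet n D) {ι : Type*} (s : Finset ι)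
    (u v : ι → Fin n → ℚ) (hu : ∀ p ∈ s, u p ∈ D) (hv : ∀ p ∈ s, v p ∈ D)
    (h : ∀ p ∈ s, ∀ q ∈ s, ∀ i, u p i < u q i ↔ v p i < v q i)
    (a : Fin n → ℚ) (ha : a ∈ D) :
    ∃ b ∈ D, ∀ p ∈ s, ∀ i, (u p i < a i ↔ v p i < b i) ∧ (a i < u p i ↔ b i < v p i) := by
  classical
  by_cases hex : ∃ q ∈ s, u q = a
  · obtain ⟨q, hq, rfl⟩ := hex
    exact ⟨v q, hv q hq, fun p hp i => ⟨h p hp q hq i, h q hq p hp i⟩⟩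
  push Not at hex
  have hne : ∀ p ∈ s, ∀ i, u p i ≠ a i := fun p hp => hD.2 _ (hu p hp) _ ha (hex p hp)
  have hm : ∀ i, ∃ m : ℚ, (∀ x ∈ (s.filter (fun p => u p i < a i)).image (fun p => v p i), x < m) ∧
      (∀ y ∈ (s.filter (fun p => a i < u p i)).image (fun p => v p i), m < y) := by
    intro i
    apply Order.exists_between_finsets
    intro x hx y hy
    simp only [Finset.mem_image, Finset.mem_filter] at hx hy
    obtain ⟨p, ⟨hp, hpa⟩, rfl⟩ := hx
    obtain ⟨q, ⟨hq, hqa⟩, rfl⟩ := hy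
    exact (h p hp q hq i).1 (hpa.trans hqa)
  choose m hm1 hm2 using hm
  let U : Set (Fin n → ℚ) := ⋂ i : Fin n, ⋂ p ∈ s,
    {x | (u p i < a i → v p i < x i) ∧ (a i < u p i → x i < v p i)}
  have hU : IsOpen U := by
    refine isOpen_iInter_of_finite fun i => isOpen_biInter_finset fun p _ => ?_
    apply IsOpen.and
    · by_cases hc : u p i < a i
      · simpa [hc] using isOpen_lt continuous_const (continuous_apply i)
      · simp [hc]
    · by_cases hc : a i < u p i
      · simpa [hc] using isOpen_lt (continuous_apply i) continuous_const
      · simp [hc]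
  have hmU : m ∈ U := by
    simp only [U, Set.mem_iInter, Set.mem_ofPred_eq]
    intro i p hp
    exact ⟨fun hc => hm1 i _ (Finset.mem_image.2 ⟨p, Finset.mem_filter.2 ⟨hp, hc⟩, rfl⟩),
      fun hc => hm2 i _ (Finset.mem_image.2 ⟨p, Finset.mem_filter.2 ⟨hp, hc⟩, rfl⟩)⟩
  obtain ⟨b, hbD, hbU⟩ := hD.1.exists_mem_open hU ⟨m, hmU⟩
  refine ⟨b, hbD, fun p hp i => ?_⟩
  simp only [U, Set.mem_iInter, Set.mem_ofPred_eq] at hbU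
  obtain ⟨h1, h2⟩ := hbU i p hp
  rcases lt_or_gt_of_ne (hne p hp i) with hc | hc
  · have := h1 hc
    exact ⟨⟨fun _ => this, fun _ => hc⟩, ⟨fun h' => absurd h' hc.asymm, fun h' => absurd h' this.asymm⟩⟩
  · have := h2 hc
    exact ⟨⟨fun h' => absurd h' hc.asymm, fun h' => absurd h' this.asymm⟩, ⟨fun _ => this, fun _ => hc⟩⟩

/-- Finite partial isomorphisms, as finite sets of pairs. -/
abbrev MRPart (n : ℕ) (D : Set (Fin n → ℚ)) : Type :=
  {s : Finset ((Fin n → ℚ) × (Fin n → ℚ)) // (∀ p ∈ s, p.1 ∈ D ∧ p.2 ∈ D) ∧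
    ∀ p ∈ s, ∀ q ∈ s, ∀ i, p.1 i < q.1 i ↔ p.2 i < q.2 i}

theorem mr_insert {n : ℕ} {D : Set (Fin n → ℚ)} (s : MRPart n D) (a b : Fin n → ℚ)
    (ha : a ∈ D) (hb : b ∈ D)
    (h : ∀ p ∈ s.1, ∀ i, (p.1 i < a i ↔ p.2 i < b i) ∧ (a i < p.1 i ↔ b i < p.2 i)) :
    ∃ t : MRPart n D, s ≤ t ∧ (a, b) ∈ t.1 := by
  classical
  refine ⟨⟨insert (a, b) s.1, ?_, ?_⟩, Finset.subset_insert _ _, Finset.mem_insert_self _ _⟩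
  · intro p hp
    rcases Finset.mem_insert.1 hp with rfl | hp
    · exact ⟨ha, hb⟩
    · exact s.2.1 p hp
  · intro p hp q hq i
    rcases Finset.mem_insert.1 hp with rfl | hp <;> rcases Finset.mem_insert.1 hq with rfl | hq
    · simp
    · exact (h q hq i).2
    · exact (h p hp i).1
    · exact s.2.2 p hp q hq i

theorem mr_left {n : ℕ} {D : Set (Fin n → ℚ)} (hD : MRSet n D) (s : MRPart n D)
    (a : Fin n → ℚ) (ha : a ∈ D) : ∃ t : MRPart n D, s ≤ t ∧ ∃ b, (a, b) ∈ t.1 := by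
  obtain ⟨b, hb, h⟩ := mr_ext hD s.1 Prod.fst Prod.snd (fun p hp => (s.2.1 p hp).1)
    (fun p hp => (s.2.1 p hp).2) s.2.2 a ha
  obtain ⟨t, h1, h2⟩ := mr_insert s a b ha hb h
  exact ⟨t, h1, b, h2⟩

theorem mr_right {n : ℕ} {D : Set (Fin n → ℚ)} (hD : MRSet n D) (s : MRPart n D)
    (b : Fin n → ℚ) (hb : b ∈ D) : ∃ t : MRPart n D, s ≤ t ∧ ∃ a, (a, b) ∈ t.1 := by
  obtain ⟨a, ha, h⟩ := mr_ext hD s.1 Prod.snd Prod.fst (fun p hp => (s.2.1 p hp).2)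
    (fun p hp => (s.2.1 p hp).1) (fun p hp q hq i => (s.2.2 p hp q hq i).symm) b hb
  obtain ⟨t, h1, h2⟩ := mr_insert s a b ha hb
    (fun p hp i => ⟨(h p hp i).1.symm, (h p hp i).2.symm⟩)
  exact ⟨t, h1, a, h2⟩


/-- `(D, <_1, …, <_n)` is ultrahomogeneous: any isomorphism (with respect to
the `n` coordinate orders) between finite subsets of `D` extends to an automorphism
of `(D, <_1, …, <_n)`. -/
theorem stmt_4 (n : ℕ) (hn : 2 ≤ n) (D : Set (Fin n → ℚ)) (hD : MRSet n D)
    (P Q : Set (Fin n → ℚ)) (hP : P ⊆ D) (hQ : Q ⊆ D)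
    (hPfin : P.Finite) (hQfin : Q.Finite)
    (f : (Fin n → ℚ) → (Fin n → ℚ)) (hbij : Set.BijOn f P Q)
    (hf : ∀ i : Fin n, ∀ a ∈ P, ∀ b ∈ P, a i < b i ↔ f a i < f b i) :
    ∃ g : (Fin n → ℚ) → (Fin n → ℚ), Set.BijOn g D D ∧
      (∀ i : Fin n, ∀ a ∈ D, ∀ b ∈ D, a i < b i ↔ g a i < g b i) ∧
      ∀ a ∈ P, g a = f a := by

  classical
  have hs0 : (∀ p ∈ hPfin.toFinset.image (fun a => (a, f a)), p.1 ∈ D ∧ p.2 ∈ D) ∧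
      ∀ p ∈ hPfin.toFinset.image (fun a => (a, f a)),
      ∀ q ∈ hPfin.toFinset.image (fun a => (a, f a)), ∀ i, p.1 i < q.1 i ↔ p.2 i < q.2 i := by
    constructor
    · intro p hp
      obtain ⟨a, ha, rfl⟩ := Finset.mem_image.1 hp
      have ha := hPfin.mem_toFinset.1 ha
      exact ⟨hP ha, hQ (hbij.mapsTo ha)⟩
    · intro p hp q hq i
      obtain ⟨a, ha, rfl⟩ := Finset.mem_image.1 hp
      obtain ⟨b, hb, rfl⟩ := Finset.mem_image.1 hq
      exact hf i a (hPfin.mem_toFinset.1 ha) b (hPfin.mem_toFinset.1 hb)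
  let s0 : MRPart n D := ⟨_, hs0⟩
  have : Encodable D := Encodable.ofCountable D
  let C : D ⊕ D → Order.Cofinal (MRPart n D) := fun x => Sum.elim
    (fun a => ⟨{t | ∃ b, (a.1, b) ∈ t.1}, fun s => by
      obtain ⟨t, h1, h2⟩ := mr_left hD s a.1 a.2
      exact ⟨t, h2, h1⟩⟩)
    (fun b => ⟨{t | ∃ a, (a, b.1) ∈ t.1}, fun s => by
      obtain ⟨t, h1, h2⟩ := mr_right hD s b.1 b.2
      exact ⟨t, h2, h1⟩⟩) x
  let I := Order.idealOfCofinals s0 C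
  have hs0I : s0 ∈ I := Order.mem_idealOfCofinals s0 C
  have hL : ∀ a ∈ D, ∃ b, ∃ t ∈ I, (a, b) ∈ t.1 := by
    intro a ha
    obtain ⟨t, ⟨b, hb⟩, ht⟩ := Order.cofinal_meets_idealOfCofinals s0 C (Sum.inl ⟨a, ha⟩)
    exact ⟨b, t, ht, hb⟩
  have hR : ∀ b ∈ D, ∃ a, ∃ t ∈ I, (a, b) ∈ t.1 := by
    intro b hb
    obtain ⟨t, ⟨a, ha⟩, ht⟩ := Order.cofinal_meets_idealOfCofinals s0 C (Sum.inr ⟨b, hb⟩)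
    exact ⟨a, t, ht, ha⟩
  have hmem : ∀ a b, (∃ t ∈ I, (a, b) ∈ t.1) → a ∈ D ∧ b ∈ D := by
    rintro a b ⟨t, -, h⟩
    exact t.2.1 _ h
  have hiff : ∀ a b c d, (∃ t ∈ I, (a, b) ∈ t.1) → (∃ t ∈ I, (c, d) ∈ t.1) →
      ∀ i, a i < c i ↔ b i < d i := by
    rintro a b c d ⟨t, ht, h⟩ ⟨t', ht', h'⟩ i
    obtain ⟨r, -, hr, hr'⟩ := I.directed t ht t' ht'
    exact r.2.2 _ (hr h) _ (hr' h') i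
  have hfun : ∀ a b d, (∃ t ∈ I, (a, b) ∈ t.1) → (∃ t ∈ I, (a, d) ∈ t.1) → b = d := by
    intro a b d h h'
    funext i
    have h1 := hiff _ _ _ _ h h' i
    have h2 := hiff _ _ _ _ h' h i
    simp only [lt_irrefl, false_iff, not_lt] at h1 h2
    exact le_antisymm h2 h1
  have hinj : ∀ a b c, (∃ t ∈ I, (a, b) ∈ t.1) → (∃ t ∈ I, (c, b) ∈ t.1) → a = c := by
    intro a b d h h'
    funext i
    have h1 := hiff _ _ _ _ h h' i
    have h2 := hiff _ _ _ _ h' h i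
    simp only [lt_irrefl, iff_false, not_lt] at h1 h2
    exact le_antisymm h2 h1
  choose! g hg using hL
  refine ⟨g, ⟨fun a ha => (hmem _ _ (hg a ha)).2, ?_, ?_⟩, ?_, ?_⟩
  · intro a ha b hb hab
    have h1 := hg a ha
    rw [hab] at h1
    exact hinj _ _ _ h1 (hg b hb)
  · intro b hb
    obtain ⟨a, h⟩ := hR b hb
    have ha := (hmem _ _ h).1
    exact ⟨a, ha, hfun _ _ _ (hg a ha) h⟩
  · intro i a ha b hb
    exact hiff _ _ _ _ (hg a ha) (hg b hb) i
  · intro a ha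
    exact hfun _ _ _ (hg a (hP ha)) ⟨s0, hs0I,
      Finset.mem_image.2 ⟨a, hPfin.mem_toFinset.2 ha, rfl⟩⟩
end

section
/- Let n ≥ 2 and let D ⊆ ℚ^n be a Manaster–Remmel set with coordinate orders <_1,...,<_n. Then every finite set P equipped with n linear orders <_1,...,<_n embeds into (D, <_1,...,<_n): there is an injection f : P → D with p <_i q iff f(p) <_i f(q) for all i ≤ n and p, q ∈ P. Consequently, since a <_i b for all i ≤ n iff a < b in the product order, every finite partial order of dimension at most n, together with any n linear orders realizing it, embeds into D with the product order and the coordinate orders. -/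
/-- every finite set `P` with `n` linear orders embeds into
`(D, <_1, …, <_n)`; consequently every finite partial order of dimension at most `n`,
together with any `n` linear orders realizing it, embeds into `D` with the product order
and the coordinate orders. -/
theorem stmt_5 (n : ℕ) (hn : 2 ≤ n) (D : Set (Fin n → ℚ)) (hD : MRSet n D)
    (P : Type) [Fintype P] (L : Fin n → P → P → Prop)
    (hL : ∀ i, IsStrictTotalOrder P (L i)) :
    ∃ f : P → (Fin n → ℚ), (∀ p, f p ∈ D) ∧ Function.Injective f ∧
      (∀ i : Fin n, ∀ p q : P, L i p q ↔ f p i < f q i) ∧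
      ∀ r : P → P → Prop, (∀ p q, r p q ↔ ∀ i, L i p q) →
        ∀ p q : P, r p q ↔ ProdLt (f p) (f q) := by
  classical
  let rk : Fin n → P → ℕ := fun i p => (Finset.univ.filter (fun q => L i q p)).card
  have hrk : ∀ i p q, L i p q → rk i p + 1 ≤ rk i q := by
    intro i p q h
    haveI := hL i
    apply Nat.succ_le_of_lt
    apply Finset.card_lt_card
    rw [Finset.ssubset_iff_of_subset]
    · exact ⟨p, by simpa using h, by simpa using irrefl_of (L i) p⟩
    · intro x hx
      simp only [Finset.mem_filter, Finset.mem_univ, true_and] at hx ⊢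
      exact trans_of (L i) hx h
  have hex : ∀ p : P, ∃ x ∈ D, ∀ i, (rk i p : ℚ) < x i ∧ x i < rk i p + 1 := by
    intro p
    have ho : IsOpen (Set.pi Set.univ (fun i : Fin n => Set.Ioo (rk i p : ℚ) (rk i p + 1))) :=
      isOpen_set_pi Set.finite_univ (fun i _ => isOpen_Ioo)
    obtain ⟨x, hx, hxD⟩ := hD.1.inter_open_nonempty _ ho
      ⟨fun i => (rk i p : ℚ) + 1 / 2, fun i _ => ⟨by linarith, by linarith⟩⟩
    exact ⟨x, hxD, fun i => hx i trivial⟩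
  choose f hfD hf using hex
  have hlt : ∀ i p q, L i p q → f p i < f q i := by
    intro i p q h
    have h1 : (rk i p : ℚ) + 1 ≤ rk i q := by exact_mod_cast hrk i p q h
    linarith [(hf p i).2, (hf q i).1]
  have htri : ∀ i p q, L i p q ∨ p = q ∨ L i q p := by
    intro i p q
    haveI := hL i
    exact trichotomous_of (L i) p q
  have hiff : ∀ i p q, L i p q ↔ f p i < f q i := by
    intro i p q
    refine ⟨hlt i p q, fun h => ?_⟩
    rcases htri i p q with h1 | h1 | h1
    · exact h1
    · subst h1
      exact absurd h (lt_irrefl _)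
    · exact absurd h (hlt i q p h1).asymm
  refine ⟨f, hfD, ?_, hiff, ?_⟩
  · intro p q h
    rcases htri ⟨0, by omega⟩ p q with h1 | h1 | h1
    · have := hlt _ _ _ h1
      rw [h] at this
      exact absurd this (lt_irrefl _)
    · exact h1
    · have := hlt _ _ _ h1
      rw [h] at this
      exact absurd this (lt_irrefl _)
  · intro r hr p q
    rw [hr]
    constructor
    · intro h
      refine ⟨fun i => (hlt i p q (h i)).le, fun he => ?_⟩
      have := hlt ⟨0, by omega⟩ p q (h _)
      rw [he] at this
      exact lt_irrefl _ this
    · rintro ⟨h1, h2⟩ i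
      exact (hiff i p q).2 (lt_of_le_of_ne (h1 i) (hD.2 _ (hfD p) _ (hfD q) h2 i))
end

section
/- Fix n ≥ 2. The structure (ℚ^n, <, <_lex_1,...,<_lex_n), where < is the product order and <_lex_i is the i-th lexicographic order, is not ultrahomogeneous: there exist three-element subsets S, T ⊆ ℚ^n and a bijection f : S → T preserving and reflecting < and each <_lex_i, such that f does not extend to any bijection of ℚ^n preserving and reflecting < and each <_lex_i. -/
/-- The `i`-th lexicographic order on `ℚ^n`: coordinates are compared in the cyclic order
`i, i+1, …, n, 1, …, i-1`, and `a <_lex_i b` iff at the first coordinate in this sequence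
where `a` and `b` differ, the coordinate of `a` is smaller. -/
def LexLt {n : ℕ} (i : Fin n) (a b : Fin n → ℚ) : Prop :=
  ∃ k : Fin n, a (i + k) < b (i + k) ∧ ∀ j : Fin n, j < k → a (i + j) = b (i + j)

theorem LexLt_of_ProdLt {m : ℕ} (i : Fin (m+2)) {a b : Fin (m+2) → ℚ} (h : ProdLt a b) :
    LexLt i a b := by
  classical
  obtain ⟨h1, h2⟩ := h
  have hex : ∃ k : Fin (m+2), a (i + k) ≠ b (i + k) := by
    by_contra hc
    push Not at hc
    apply h2
    funext j
    have := hc (j - i)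
    simpa using this
  obtain ⟨k, hk, hmin⟩ := WellFounded.has_min (wellFounded_lt (α := Fin (m+2)))
    {k | a (i + k) ≠ b (i + k)} hex
  refine ⟨k, lt_of_le_of_ne (h1 _) hk, fun j hj => ?_⟩
  by_contra hne
  exact hmin j hne hj

theorem LexLt_asymm {n : ℕ} (i : Fin n) {a b : Fin n → ℚ} (h : LexLt i a b) :
    ¬ LexLt i b a := by
  rintro ⟨k, hk, hk'⟩
  obtain ⟨l, hl, hl'⟩ := h
  rcases lt_trichotomy k l with h | h | h
  · have := hl' k h; linarith
  · subst h; linarith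
  · have := hk' l h; linarith

theorem ProdLt_asymm {n : ℕ} {a b : Fin n → ℚ} (h : ProdLt a b) : ¬ ProdLt b a := fun h' =>
  h.2 (funext fun i => le_antisymm (h.1 i) (h'.1 i))

theorem LexLt_irrefl {n : ℕ} (i : Fin n) (a : Fin n → ℚ) : ¬ LexLt i a a := fun h =>
  LexLt_asymm i h h

theorem ProdLt_irrefl {n : ℕ} (a : Fin n → ℚ) : ¬ ProdLt a a := fun h => h.2 rfl

theorem pres_of_lt {m : ℕ} {a b c d : Fin (m+2) → ℚ} (h : ProdLt a b) (h' : ProdLt c d) :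
    ((ProdLt a b ↔ ProdLt c d) ∧ ∀ i, LexLt i a b ↔ LexLt i c d) ∧
    ((ProdLt b a ↔ ProdLt d c) ∧ ∀ i, LexLt i b a ↔ LexLt i d c) := by
  refine ⟨⟨iff_of_true h h', fun i =>
    iff_of_true (LexLt_of_ProdLt i h) (LexLt_of_ProdLt i h')⟩,
    ⟨iff_of_false (ProdLt_asymm h) (ProdLt_asymm h'), fun i =>
    iff_of_false (LexLt_asymm i (LexLt_of_ProdLt i h)) (LexLt_asymm i (LexLt_of_ProdLt i h'))⟩⟩

theorem pres_refl {n : ℕ} (a b : Fin n → ℚ) :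
    (ProdLt a a ↔ ProdLt b b) ∧ ∀ i, LexLt i a a ↔ LexLt i b b :=
  ⟨iff_of_false (ProdLt_irrefl a) (ProdLt_irrefl b), fun i =>
    iff_of_false (LexLt_irrefl i a) (LexLt_irrefl i b)⟩

/-- If `a` and `b` agree at coordinate `0`, nothing lies `lex_0`-between them and
`lex_1`-above `b`. -/
theorem no_between {m : ℕ} {a b c : Fin (m+2) → ℚ} (hab : a 0 = b 0)
    (h1 : LexLt 0 a c) (h2 : LexLt 0 c b) (h3 : LexLt 1 b c) : False := by
  obtain ⟨k1, h1, h1'⟩ := h1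
  obtain ⟨k2, h2, h2'⟩ := h2
  obtain ⟨k3, h3, h3'⟩ := h3
  simp only [zero_add] at *
  have ha : a 0 ≤ c 0 := by
    by_cases hk : k1 = 0
    · subst hk; exact h1.le
    · exact (h1' 0 (Fin.pos_of_ne_zero hk)).le
  have hk2 : k2 ≠ 0 := by
    rintro rfl; linarith
  have hc : c 0 = b 0 := h2' 0 (Fin.pos_of_ne_zero hk2)
  obtain ⟨p, rfl⟩ : ∃ p, k3 = p - 1 := ⟨1 + k3, by simp⟩
  rw [add_sub_cancel] at h3
  have hp : p ≠ 0 := by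
    rintro rfl; linarith
  rcases lt_trichotomy k2 p with h | h | h
  · have := h3' (k2 - 1) (by
      rw [Fin.lt_def, Fin.val_sub_one_of_ne_zero hk2, Fin.val_sub_one_of_ne_zero hp]
      have := Fin.pos_of_ne_zero hk2
      rw [Fin.lt_def] at this h
      simp at this
      omega)
    rw [add_sub_cancel] at this
    linarith
  · subst h; linarith
  · have := h2' p h; linarith

theorem stmt_7 (n : ℕ) (hn : 2 ≤ n) :
    ∃ S T : Set (Fin n → ℚ), S.ncard = 3 ∧ T.ncard = 3 ∧
      ∃ f : (Fin n → ℚ) → (Fin n → ℚ), Set.BijOn f S T ∧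
        (∀ a ∈ S, ∀ b ∈ S,
          (ProdLt a b ↔ ProdLt (f a) (f b)) ∧
          ∀ i : Fin n, LexLt i a b ↔ LexLt i (f a) (f b)) ∧
        ¬ ∃ g : (Fin n → ℚ) → (Fin n → ℚ), Function.Bijective g ∧
            (∀ a b : Fin n → ℚ,
              (ProdLt a b ↔ ProdLt (g a) (g b)) ∧
              ∀ i : Fin n, LexLt i a b ↔ LexLt i (g a) (g b)) ∧
            ∀ a ∈ S, g a = f a := by
  obtain ⟨m, rfl⟩ : ∃ m, n = m + 2 := ⟨n - 2, by omega⟩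
  let z : Fin (m+2) → ℚ := fun _ => 0
  let e : Fin (m+2) → ℚ := fun i => if i = 0 then 0 else 1
  let o : Fin (m+2) → ℚ := fun _ => 1
  let t : Fin (m+2) → ℚ := fun _ => 2
  have h10 : (1 : Fin (m+2)) ≠ 0 := by simp
  have hze : ProdLt z e := ⟨fun i => by simp only [z, e]; split_ifs <;> norm_num,
    fun h => by have := congrFun h 1; simp [z, e] at this⟩
  have het : ProdLt e t := ⟨fun i => by simp only [t, e]; split_ifs <;> norm_num,
    fun h => by have := congrFun h 0; simp [t, e] at this⟩
  have hzt : ProdLt z t := ⟨fun i => by simp [z, t],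
    fun h => by have := congrFun h 0; simp [z, t] at this⟩
  have hzo : ProdLt z o := ⟨fun i => by simp [z, o],
    fun h => by have := congrFun h 0; simp [z, o] at this⟩
  have hot : ProdLt o t := ⟨fun i => by simp [o, t],
    fun h => by have := congrFun h 0; simp [o, t] at this⟩
  let f : (Fin (m+2) → ℚ) → (Fin (m+2) → ℚ) := fun a => if a = e then o else a
  have fz : f z = z := if_neg hze.2
  have fe : f e = o := if_pos rfl
  have ft : f t = t := if_neg het.2.symm
  clear_value f
  refine ⟨{z, e, t}, {z, o, t}, Set.ncard_eq_three.2 ⟨z, e, t, hze.2, hzt.2, het.2, rfl⟩,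
    Set.ncard_eq_three.2 ⟨z, o, t, hzo.2, hzt.2, hot.2, rfl⟩, f, ?_, ?_, ?_⟩
  · have himg : f '' {z, e, t} = {z, o, t} := by
      simp only [Set.image_insert_eq, Set.image_singleton, fz, fe, ft]
    rw [← himg]
    apply Set.InjOn.bijOn_image
    have := hzo.2
    have := hzt.2
    have := hot.2
    rintro a (rfl | rfl | rfl) b (rfl | rfl | rfl) hab <;> simp only [fz, fe, ft] at hab <;>
      first
      | rfl
      | exact absurd hab (by assumption)
      | exact absurd hab.symm (by assumption)
  · rintro a (rfl | rfl | rfl) b (rfl | rfl | rfl) <;> simp only [fz, fe, ft]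
    · exact ⟨trivial, fun _ => trivial⟩
    · exact (pres_of_lt hze hzo).1
    · exact ⟨trivial, fun _ => trivial⟩
    · exact (pres_of_lt hze hzo).2
    · exact pres_refl _ _
    · exact (pres_of_lt het hot).1
    · exact ⟨trivial, fun _ => trivial⟩
    · exact (pres_of_lt het hot).2
    · exact ⟨trivial, fun _ => trivial⟩
  · rintro ⟨g, hg, hpres, hext⟩
    have gz : g z = z := by rw [hext z (by simp), fz]
    have ge : g e = o := by rw [hext e (by simp), fe]
    obtain ⟨c, hc⟩ := hg.2 (fun i => if i = 0 then 1/2 else 2)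
    have k1 : LexLt 0 z c := by
      rw [(hpres z c).2 0, gz, hc]
      exact ⟨0, by simp [z], fun j hj => absurd hj (by simp)⟩
    have k2 : LexLt 0 c e := by
      rw [(hpres c e).2 0, ge, hc]
      exact ⟨0, by simp [o]; norm_num, fun j hj => absurd hj (by simp)⟩
    have k3 : LexLt 1 e c := by
      rw [(hpres e c).2 1, ge, hc]
      exact ⟨0, by simp [o], fun j hj => absurd hj (by simp)⟩
    exact no_between (by simp [z, e]) k1 k2 k3
end

section
/- Fix n ≥ 2. Let X be a set equipped with n linear orders <_1,...,<_n satisfying the region-density property. Let Q be a finite set equipped with n linear orders <_1,...,<_n, let P ⊆ Q carry the induced orders, and let f : P → X be an injection with p <_i q iff f(p) <_i f(q) for all i ≤ n and p, q ∈ P. Then f extends to an injection g : Q → X with p <_i q iff g(p) <_i g(q) for all i ≤ n and p, q ∈ Q. -/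
/-- A set `X` with `n` linear orders `L 1, …, L n` satisfies the region-density property:
for all partial specifications `lo, hi : Fin n → Option X` of lower and upper bounds which
are consistent (whenever both a lower bound `a` and an upper bound `b` are specified in the
`i`-th order, `a <_i b`), there is a point of `X` lying strictly between all the specified
bounds, in each order. -/
def RegionDense (n : ℕ) {X : Type} (L : Fin n → X → X → Prop) : Prop :=
  ∀ lo hi : Fin n → Option X,
    (∀ i : Fin n, ∀ a b : X, lo i = some a → hi i = some b → L i a b) →
    ∃ d : X, ∀ i : Fin n,
      (∀ a : X, lo i = some a → L i a d) ∧ (∀ b : X, hi i = some b → L i d b)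

theorem exists_bound {X Q : Type} (r : X → X → Prop) (htr : ∀ a b c, r a b → r b c → r a c)
    (htot : ∀ a b, r a b ∨ a = b ∨ r b a) (f : Q → X) (S : Set Q) (hS : S.Finite) :
    ∃ o : Option X, (∀ a, o = some a → ∃ p ∈ S, f p = a) ∧
      ∀ p ∈ S, ∃ a, o = some a ∧ (f p = a ∨ r (f p) a) := by
  induction S, hS using Set.Finite.induction_on with
  | empty => exact ⟨none, by simp, by simp⟩
  | @insert x S hx hS ih =>
    obtain ⟨o, h1, h2⟩ := ih
    cases o with
    | none =>
      refine ⟨some (f x), fun a ha => ⟨x, Set.mem_insert _ _, by simpa using ha⟩, ?_⟩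
      rintro p (rfl | hp)
      · exact ⟨_, rfl, Or.inl rfl⟩
      · obtain ⟨a, ha, _⟩ := h2 p hp
        simp at ha
    | some b =>
      by_cases hb : r b (f x)
      · refine ⟨some (f x), fun a ha => ⟨x, Set.mem_insert _ _, by simpa using ha⟩, ?_⟩
        rintro p (rfl | hp)
        · exact ⟨_, rfl, Or.inl rfl⟩
        · obtain ⟨a, ha, h⟩ := h2 p hp
          obtain rfl : b = a := by simpa using ha
          refine ⟨_, rfl, Or.inr ?_⟩
          rcases h with h | h
          · rw [h]; exact hb
          · exact htr _ _ _ h hb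
      · refine ⟨some b, fun a ha => ?_, ?_⟩
        · obtain ⟨p, hp, h⟩ := h1 a ha
          exact ⟨p, Set.mem_insert_of_mem _ hp, h⟩
        · rintro p (rfl | hp)
          · refine ⟨b, rfl, ?_⟩
            rcases htot b (f p) with h | h | h
            · exact absurd h hb
            · exact Or.inl h.symm
            · exact Or.inr h
          · exact h2 p hp

/-- embeddings of subsets of finite sets with `n` linear orders into a
region-dense structure `(X, <_1, …, <_n)` extend to embeddings of the whole finite set. -/
theorem stmt_8 (n : ℕ) (hn : 2 ≤ n)
    (X : Type) (LX : Fin n → X → X → Prop)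
    (hLX : ∀ i, IsStrictTotalOrder X (LX i)) (hdense : RegionDense n LX)
    (Q : Type) [Fintype Q] (LQ : Fin n → Q → Q → Prop)
    (hLQ : ∀ i, IsStrictTotalOrder Q (LQ i))
    (P : Set Q) (f : Q → X) (hfinj : Set.InjOn f P)
    (hf : ∀ i : Fin n, ∀ p ∈ P, ∀ q ∈ P, LQ i p q ↔ LX i (f p) (f q)) :
    ∃ g : Q → X, Function.Injective g ∧ (∀ p ∈ P, g p = f p) ∧
      ∀ i : Fin n, ∀ p q : Q, LQ i p q ↔ LX i (g p) (g q) := by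
  classical
  have irX : ∀ i a, ¬ LX i a a := fun i => (hLX i).irrefl
  have trX : ∀ i a b c, LX i a b → LX i b c → LX i a c := fun i => (hLX i).trans
  have toX : ∀ i a b, LX i a b ∨ a = b ∨ LX i b a := fun i a b =>
    haveI := hLX i; trichotomous_of (LX i) a b
  have irQ : ∀ i a, ¬ LQ i a a := fun i => (hLQ i).irrefl
  have trQ : ∀ i a b c, LQ i a b → LQ i b c → LQ i a c := fun i => (hLQ i).trans
  have toQ : ∀ i a b, LQ i a b ∨ a = b ∨ LQ i b a := fun i a b =>
    haveI := hLQ i; trichotomous_of (LQ i) a b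
  have key : ∀ T : Set Q, T.Finite → ∃ g : Q → X, (∀ p ∈ P, g p = f p) ∧
      ∀ i, ∀ p ∈ P ∪ T, ∀ q ∈ P ∪ T, LQ i p q → LX i (g p) (g q) := by
    intro T hT
    induction T, hT using Set.Finite.induction_on with
    | empty =>
      refine ⟨f, fun _ _ => rfl, fun i p hp q hq h => ?_⟩
      rw [Set.union_empty] at hp hq
      exact (hf i p hp q hq).1 h
    | @insert x T hx hT ih =>
      obtain ⟨g, hg1, hg2⟩ := ih
      by_cases hxP : x ∈ P
      · refine ⟨g, hg1, ?_⟩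
        have : P ∪ insert x T = P ∪ T := by
          rw [Set.union_insert, Set.insert_eq_of_mem (Set.mem_union_left T hxP)]
        rw [this]; exact hg2
      have hxU : x ∉ P ∪ T := fun h => h.elim hxP hx
      choose lo hlo1 hlo2 using fun i => exists_bound (LX i) (trX i) (toX i) g
        {p | p ∈ P ∪ T ∧ LQ i p x} (Set.toFinite _)
      choose hi hhi1 hhi2 using fun i => exists_bound (fun a b => LX i b a)
        (fun a b c h h' => trX i _ _ _ h' h) (fun a b => by
          rcases toX i b a with h | h | h
          · exact Or.inl h
          · exact Or.inr (Or.inl h.symm)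
          · exact Or.inr (Or.inr h)) g
        {p | p ∈ P ∪ T ∧ LQ i x p} (Set.toFinite _)
      obtain ⟨d, hd⟩ := hdense lo hi (by
        intro i a b ha hb
        obtain ⟨p, ⟨hp, hpx⟩, rfl⟩ := hlo1 i a ha
        obtain ⟨q, ⟨hq, hqx⟩, rfl⟩ := hhi1 i b hb
        exact hg2 i p hp q hq (trQ i _ _ _ hpx hqx))
      refine ⟨Function.update g x d, fun p hp => ?_, ?_⟩
      · rw [Function.update_of_ne (by rintro rfl; exact hxP hp)]
        exact hg1 p hp
      · rw [Set.union_insert]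
        rintro i p hp q hq h
        rcases hp with rfl | hp
        · rcases hq with rfl | hq
          · exact absurd h (irQ i _)
          · rw [Function.update_self, Function.update_of_ne (by rintro rfl; exact hxU hq)]
            obtain ⟨a, ha, h'⟩ := hhi2 i q ⟨hq, h⟩
            have := (hd i).2 a ha
            rcases h' with h' | h'
            · rw [h']; exact this
            · exact trX i _ _ _ this h'
        · rw [Function.update_of_ne (a := p) (by rintro rfl; exact hxU hp)]
          rcases hq with rfl | hq
          · rw [Function.update_self]
            obtain ⟨a, ha, h'⟩ := hlo2 i p ⟨hp, h⟩
            have := (hd i).1 a ha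
            rcases h' with h' | h'
            · rw [h']; exact this
            · exact trX i _ _ _ h' this
          · rw [Function.update_of_ne (by rintro rfl; exact hxU hq)]
            exact hg2 i p hp q hq h
  obtain ⟨g, hg1, hg2⟩ := key Set.univ Set.finite_univ
  have hg : ∀ i p q, LQ i p q → LX i (g p) (g q) := fun i p q =>
    hg2 i p (Or.inr trivial) q (Or.inr trivial)
  refine ⟨g, fun p q hpq => ?_, hg1, fun i p q => ⟨hg i p q, fun h => ?_⟩⟩
  · have i : Fin n := ⟨0, by omega⟩
    rcases toQ i p q with h | h | h
    · have := hg i _ _ h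
      rw [hpq] at this
      exact absurd this (irX i _)
    · exact h
    · have := hg i _ _ h
      rw [hpq] at this
      exact absurd this (irX i _)
  · rcases toQ i p q with h' | rfl | h'
    · exact h'
    · exact absurd h (irX i _)
    · exact absurd (trX i _ _ _ h (hg i _ _ h')) (irX i _)
end

section
/- Fix n ≥ 2. Any two countable sets X and Y, each equipped with n linear orders <_1,...,<_n satisfying the region-density property, are isomorphic: there exists a bijection g : X → Y such that a <_i b iff g(a) <_i g(b) for all i ≤ n and a, b ∈ X. In particular, every countable such structure is isomorphic to (D, <_1,...,<_n) for any Manaster–Remmel set D ⊆ ℚ^n with its coordinate orders. -/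
/-- Plain facts of a strict total order. -/
structure PlainSTO {X : Type} (L : X → X → Prop) : Prop where
  irr : ∀ a, ¬ L a a
  tr : ∀ a b c, L a b → L b c → L a c
  tri : ∀ a b, L a b ∨ a = b ∨ L b a

theorem PlainSTO.flip {X : Type} {L : X → X → Prop} (h : PlainSTO L) :
    PlainSTO (fun a b => L b a) :=
  ⟨h.irr, fun a b c h1 h2 => h.tr _ _ _ h2 h1, fun a b => by
    rcases h.tri a b with h | h | h <;> tauto⟩

theorem exists_top {X : Type} {L : X → X → Prop} (h : PlainSTO L) (s : Finset X) :
    ∃ o : Option X, (∀ a, o = some a → a ∈ s) ∧ ∀ b ∈ s, ∃ a, o = some a ∧ (b = a ∨ L b a) := by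
  classical
  induction s using Finset.induction_on with
  | empty => exact ⟨none, by simp, by simp⟩
  | insert x s _ ih =>
    obtain ⟨o, h1, h2⟩ := ih
    cases o with
    | none =>
      refine ⟨some x, by simp, fun b hb => ⟨x, rfl, ?_⟩⟩
      rcases Finset.mem_insert.1 hb with hb | hb
      · exact Or.inl hb
      · obtain ⟨a, ha, _⟩ := h2 b hb
        cases ha
    | some m =>
      have key : ∀ b ∈ s, b = m ∨ L b m := by
        intro b hb
        obtain ⟨a, ha, h⟩ := h2 b hb
        cases ha
        exact h
      have hm := h1 m rfl
      by_cases hx : L m x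
      · refine ⟨some x, by simp, fun b hb => ⟨x, rfl, ?_⟩⟩
        rcases Finset.mem_insert.1 hb with hb | hb
        · exact Or.inl hb
        · rcases key b hb with rfl | h'
          · exact Or.inr hx
          · exact Or.inr (h.tr _ _ _ h' hx)
      · refine ⟨some m, ?_, fun b hb => ⟨m, rfl, ?_⟩⟩
        · intro a ha
          cases ha
          exact Finset.mem_insert_of_mem hm
        · rcases Finset.mem_insert.1 hb with rfl | hb
          · rcases h.tri b m with h | h | h
            · exact Or.inr h
            · exact Or.inl h
            · exact absurd h hx
          · exact key b hb

/-- A finite set of pairs is a partial isomorphism. -/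
def IsPI {n : ℕ} {X Y : Type} (LX : Fin n → X → X → Prop) (LY : Fin n → Y → Y → Prop)
    (f : Finset (X × Y)) : Prop :=
  ∀ p ∈ f, ∀ q ∈ f, ∀ i, LX i p.1 q.1 ↔ LY i p.2 q.2

theorem extend_pt {n : ℕ} {X Y : Type}
    {LX : Fin n → X → X → Prop} {LY : Fin n → Y → Y → Prop}
    (hX : ∀ i, PlainSTO (LX i)) (hY : ∀ i, PlainSTO (LY i)) (hd : RegionDense n LY)
    (f : Finset (X × Y)) (hf : IsPI LX LY f) (x : X) :
    ∃ y : Y, ∀ p ∈ f, ∀ i, (LX i p.1 x ↔ LY i p.2 y) ∧ (LX i x p.1 ↔ LY i y p.2) := by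
  classical
  by_cases hx : ∃ p ∈ f, p.1 = x
  · obtain ⟨p, hp, rfl⟩ := hx
    exact ⟨p.2, fun q hq i => ⟨hf q hq p hp i, hf p hp q hq i⟩⟩
  push Not at hx
  choose lo hlo1 hlo2 using fun i =>
    exists_top (hY i) ((f.filter (fun p => LX i p.1 x)).image Prod.snd)
  choose hi hhi1 hhi2 using fun i =>
    exists_top (hY i).flip ((f.filter (fun p => LX i x p.1)).image Prod.snd)
  obtain ⟨d, hd⟩ := hd lo hi (by
    intro i a b ha hb
    have h1 := hlo1 i a ha
    have h2 := hhi1 i b hb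
    simp only [Finset.mem_image, Finset.mem_filter] at h1 h2
    obtain ⟨p, ⟨hp, hpx⟩, rfl⟩ := h1
    obtain ⟨q, ⟨hq, hqx⟩, rfl⟩ := h2
    exact (hf p hp q hq i).1 ((hX i).tr _ _ _ hpx hqx))
  have hl : ∀ p ∈ f, ∀ i, LX i p.1 x → LY i p.2 d := by
    intro p hp i h
    obtain ⟨a, ha, h'⟩ := hlo2 i p.2
      (Finset.mem_image_of_mem _ (Finset.mem_filter.2 ⟨hp, h⟩))
    have := (hd i).1 a ha
    rcases h' with h' | h'
    · rw [h']; exact this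
    · exact (hY i).tr _ _ _ h' this
  have hr : ∀ p ∈ f, ∀ i, LX i x p.1 → LY i d p.2 := by
    intro p hp i h
    obtain ⟨a, ha, h'⟩ := hhi2 i p.2
      (Finset.mem_image_of_mem _ (Finset.mem_filter.2 ⟨hp, h⟩))
    have := (hd i).2 a ha
    rcases h' with h' | h'
    · rw [h']; exact this
    · exact (hY i).tr _ _ _ this h'
  refine ⟨d, fun p hp i => ?_⟩
  have a1 := hl p hp i
  have a2 := hr p hp i
  have a3 : ¬ (LY i p.2 d ∧ LY i d p.2) := fun h => (hY i).irr _ ((hY i).tr _ _ _ h.1 h.2)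
  have a4 : ¬ (LX i p.1 x ∧ LX i x p.1) := fun h => (hX i).irr _ ((hX i).tr _ _ _ h.1 h.2)
  have a5 := (hX i).tri p.1 x
  have a6 := hx p hp
  tauto

theorem IsPI.insert {n : ℕ} {X Y : Type} [DecidableEq (X × Y)]
    {LX : Fin n → X → X → Prop} {LY : Fin n → Y → Y → Prop}
    (hX : ∀ i, PlainSTO (LX i)) (hY : ∀ i, PlainSTO (LY i))
    {f : Finset (X × Y)} (hf : IsPI LX LY f) {x : X} {y : Y}
    (h : ∀ p ∈ f, ∀ i, (LX i p.1 x ↔ LY i p.2 y) ∧ (LX i x p.1 ↔ LY i y p.2)) :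
    IsPI LX LY (insert (x, y) f) := by
  intro p hp q hq i
  rcases Finset.mem_insert.1 hp with rfl | hp <;> rcases Finset.mem_insert.1 hq with rfl | hq
  · exact iff_of_false ((hX i).irr _) ((hY i).irr _)
  · exact (h q hq i).2
  · exact (h p hp i).1
  · exact hf p hp q hq i

theorem back_forth {n : ℕ} (hn : 0 < n) {X Y : Type} [Countable X] [Countable Y]
    {LX : Fin n → X → X → Prop} {LY : Fin n → Y → Y → Prop}
    (hX : ∀ i, PlainSTO (LX i)) (hY : ∀ i, PlainSTO (LY i))
    (hdX : RegionDense n LX) (hdY : RegionDense n LY) :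
    ∃ g : X → Y, Function.Bijective g ∧ ∀ i a b, LX i a b ↔ LY i (g a) (g b) := by
  classical
  let P := {f : Finset (X × Y) // IsPI LX LY f}
  have fwd : ∀ (f : P) (x : X), ∃ g : P, f.1 ⊆ g.1 ∧ ∃ y, (x, y) ∈ g.1 := by
    intro f x
    obtain ⟨y, hy⟩ := extend_pt hX hY hdY f.1 f.2 x
    exact ⟨⟨_, f.2.insert hX hY hy⟩, Finset.subset_insert _ _, y, Finset.mem_insert_self _ _⟩
  have bwd : ∀ (f : P) (y : Y), ∃ g : P, f.1 ⊆ g.1 ∧ ∃ x, (x, y) ∈ g.1 := by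
    intro f y
    obtain ⟨x, hx⟩ := extend_pt hY hX hdX (f.1.image Prod.swap) (by
      intro p hp q hq i
      obtain ⟨p, hp1, rfl⟩ := Finset.mem_image.1 hp
      obtain ⟨q, hq1, rfl⟩ := Finset.mem_image.1 hq
      exact (f.2 p hp1 q hq1 i).symm) y
    refine ⟨⟨_, f.2.insert hX hY (x := x) (y := y) fun p hp i => ?_⟩,
      Finset.subset_insert _ _, x, Finset.mem_insert_self _ _⟩
    have := hx _ (Finset.mem_image_of_mem _ hp) i
    exact ⟨this.1.symm, this.2.symm⟩
  have : Nonempty X := let ⟨d, _⟩ := hdX (fun _ => none) (fun _ => none) (by simp); ⟨d⟩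
  have : Nonempty Y := let ⟨d, _⟩ := hdY (fun _ => none) (fun _ => none) (by simp); ⟨d⟩
  obtain ⟨ex, hex⟩ := exists_surjective_nat X
  obtain ⟨ey, hey⟩ := exists_surjective_nat Y
  have step : ∀ (k : ℕ) (f : P), ∃ g : P, f.1 ⊆ g.1 ∧ (∃ y, (ex k, y) ∈ g.1) ∧
      ∃ x, (x, ey k) ∈ g.1 := by
    intro k f
    obtain ⟨g, h1, y, hy⟩ := fwd f (ex k)
    obtain ⟨g', h2, x, hx⟩ := bwd g (ey k)
    exact ⟨g', h1.trans h2, ⟨y, h2 hy⟩, x, hx⟩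
  choose nxt hn1 hn2 hn3 using step
  let F : ℕ → P := fun k => Nat.rec ⟨∅, fun p hp => by simp at hp⟩ (fun k f => nxt k f) k
  have mono : Monotone fun k => (F k).1 := monotone_nat_of_le_succ fun k => hn1 k (F k)
  have hR : ∀ k l p q i, p ∈ (F k).1 → q ∈ (F l).1 → (LX i p.1 q.1 ↔ LY i p.2 q.2) := by
    intro k l p q i hp hq
    exact (F (max k l)).2 p (mono (le_max_left _ _) hp) q (mono (le_max_right _ _) hq) i
  have tot : ∀ x, ∃ y k, (x, y) ∈ (F k).1 := by
    intro x
    obtain ⟨k, rfl⟩ := hex x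
    obtain ⟨y, hy⟩ := hn2 k (F k)
    exact ⟨y, k + 1, hy⟩
  have sur : ∀ y, ∃ x k, (x, y) ∈ (F k).1 := by
    intro y
    obtain ⟨k, rfl⟩ := hey y
    obtain ⟨x, hx⟩ := hn3 k (F k)
    exact ⟨x, k + 1, hx⟩
  choose g kg hg using tot
  have hiso : ∀ i a b, LX i a b ↔ LY i (g a) (g b) := fun i a b =>
    hR _ _ (a, g a) (b, g b) i (hg a) (hg b)
  refine ⟨g, ⟨?_, ?_⟩, hiso⟩
  · intro a b hab
    have i : Fin n := ⟨0, hn⟩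
    rcases (hX i).tri a b with h | h | h
    · rw [hiso, hab] at h
      exact absurd h ((hY i).irr _)
    · exact h
    · rw [hiso, hab] at h
      exact absurd h ((hY i).irr _)
  · intro y
    obtain ⟨x, k, hx⟩ := sur y
    refine ⟨x, ?_⟩
    have i : Fin n := ⟨0, hn⟩
    have h1 := hR _ _ (x, g x) (x, y) i (hg x) hx
    have h2 := hR _ _ (x, y) (x, g x) i hx (hg x)
    have h3 := (hX i).irr x
    rcases (hY i).tri (g x) y with h | h | h
    · exact absurd (h1.2 h) h3
    · exact h
    · exact absurd (h2.2 h) h3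

theorem plain_of {X : Type} {L : X → X → Prop} (h : IsStrictTotalOrder X L) : PlainSTO L :=
  ⟨fun a => irrefl_of L a, fun a b c h1 h2 => trans_of L h1 h2, fun a b => trichotomous_of L a b⟩

theorem MRSet.regionDense {n : ℕ} {D : Set (Fin n → ℚ)} (hD : MRSet n D) :
    RegionDense n (fun i (a b : ↥D) => (a : Fin n → ℚ) i < (b : Fin n → ℚ) i) := by
  intro lo hi hlh
  have h1 : ∀ i, ∃ U : Set ℚ, IsOpen U ∧ U.Nonempty ∧ ∀ q ∈ U,
      (∀ a, lo i = some a → a.1 i < q) ∧ (∀ b, hi i = some b → q < b.1 i) := by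
    intro i
    have := hlh i
    cases hl : lo i with
    | none =>
      cases hh : hi i with
      | none => exact ⟨Set.univ, isOpen_univ, Set.univ_nonempty, by simp⟩
      | some b => exact ⟨Set.Iio (b.1 i), isOpen_Iio, Set.nonempty_Iio, by simp⟩
    | some a =>
      cases hh : hi i with
      | none => exact ⟨Set.Ioi (a.1 i), isOpen_Ioi, Set.nonempty_Ioi, by simp⟩
      | some b =>
        exact ⟨Set.Ioo (a.1 i) (b.1 i), isOpen_Ioo, Set.nonempty_Ioo.2 (this a b hl hh), by simp⟩
  choose U hU hne hq using h1
  obtain ⟨d, hd, hdD⟩ := hD.1.inter_open_nonempty (Set.univ.pi U)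
    (isOpen_set_pi Set.finite_univ fun i _ => hU i) (Set.univ_pi_nonempty_iff.2 hne)
  exact ⟨⟨d, hdD⟩, fun i => hq i _ (hd i trivial)⟩

theorem MRSet.plain {n : ℕ} {D : Set (Fin n → ℚ)} (hD : MRSet n D) (i : Fin n) :
    PlainSTO (fun (a b : ↥D) => (a : Fin n → ℚ) i < (b : Fin n → ℚ) i) := by
  refine ⟨fun a => lt_irrefl _, fun a b c h1 h2 => lt_trans h1 h2, fun a b => ?_⟩
  by_cases h : a = b
  · exact Or.inr (Or.inl h)
  · rcases lt_or_gt_of_ne (hD.2 a.1 a.2 b.1 b.2 (fun e => h (Subtype.ext e)) i) with h | h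
    · exact Or.inl h
    · exact Or.inr (Or.inr h)

/-- any two countable region-dense structures with `n` linear orders are
isomorphic; in particular, every such structure is isomorphic to `(D, <_1, …, <_n)` for
any Manaster–Remmel set `D ⊆ ℚ^n` with its coordinate orders. -/
theorem stmt_9 (n : ℕ) (hn : 2 ≤ n)
    (X Y : Type) [Countable X] [Countable Y]
    (LX : Fin n → X → X → Prop) (LY : Fin n → Y → Y → Prop)
    (hLX : ∀ i, IsStrictTotalOrder X (LX i))
    (hLY : ∀ i, IsStrictTotalOrder Y (LY i))
    (hdX : RegionDense n LX) (hdY : RegionDense n LY) :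
    (∃ g : X → Y, Function.Bijective g ∧
      ∀ i : Fin n, ∀ a b : X, LX i a b ↔ LY i (g a) (g b)) ∧
    ∀ D : Set (Fin n → ℚ), MRSet n D →
      ∃ g : X → ↥D, Function.Bijective g ∧
        ∀ i : Fin n, ∀ a b : X, LX i a b ↔ (g a : Fin n → ℚ) i < (g b : Fin n → ℚ) i := by
  have hX := fun i => plain_of (hLX i)
  exact ⟨back_forth (by omega) hX (fun i => plain_of (hLY i)) hdX hdY,
    fun D hD => back_forth (by omega) hX hD.plain hdX hD.regionDense⟩
end

section
/- Fix n ≥ 2. The class of finite sets with n linear orders has the Ramsey property: for every k ≥ 1 and all finite sets A and B, each equipped with n linear orders, such that A embeds into B, there exists a finite set C equipped with n linear orders such that for every function c from the set of substructures of C isomorphic to A into {1,...,k}, there is a substructure B₀ of C isomorphic to B with c constant on the set of substructures of B₀ isomorphic to A. -/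
/-- `S` is a substructure of `(β, Lβ)` isomorphic to `(α, Lα)`: the image of an embedding
of `(α, Lα)` into `(β, Lβ)` (with respect to the `n` linear orders). -/
def IsCopy {n : ℕ} {α β : Type} (Lα : Fin n → α → α → Prop) (Lβ : Fin n → β → β → Prop)
    (S : Set β) : Prop :=
  ∃ e : α → β, Set.range e = S ∧ Function.Injective e ∧
    ∀ i : Fin n, ∀ a b : α, Lα i a b ↔ Lβ i (e a) (e b)

/-- End-homogeneous sets from the Ramsey property one dimension below. -/
lemma ramsey_endhom (a : ℕ) (K : Type) [Finite K] [Nonempty K]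
    (ih : ∀ b : ℕ, ∃ N : ℕ, ∀ X : Finset ℕ, N ≤ X.card → ∀ c : Finset ℕ → K,
      ∃ Y ⊆ X, Y.card = b ∧ ∃ col, ∀ S ⊆ Y, S.card = a → c S = col) (m : ℕ) :
    ∃ N : ℕ, ∀ X : Finset ℕ, N ≤ X.card → ∀ c : Finset ℕ → K,
      ∃ Y ⊆ X, Y.card = m ∧ ∃ d : ℕ → K, ∀ x ∈ Y, ∀ S ⊆ Y, S.card = a →
        (∀ y ∈ S, x < y) → c (insert x S) = d x := by
  induction m with
  | zero =>
    refine ⟨0, fun X _ c => ⟨∅, by simp, by simp, fun _ => Classical.arbitrary K, by simp⟩⟩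
  | succ m ihm =>
    obtain ⟨N', hN'⟩ := ihm
    obtain ⟨R, hR⟩ := ih N'
    refine ⟨R + 1, fun X hX c => ?_⟩
    have hne : X.Nonempty := by
      rw [← Finset.card_pos]; omega
    set x := X.min' hne with hx
    have hxX : x ∈ X := X.min'_mem hne
    obtain ⟨Y', hY'X, hY'c, col, hcol⟩ := hR (X.erase x)
      (by rw [Finset.card_erase_of_mem hxX]; omega) (fun S => c (insert x S))
    obtain ⟨Y, hYY', hYc, d, hd⟩ := hN' Y' hY'c.ge c
    have hlt : ∀ y ∈ Y, x < y := by
      intro y hy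
      have h1 := hY'X (hYY' hy)
      rw [Finset.mem_erase] at h1
      exact lt_of_le_of_ne (X.min'_le y h1.2) (Ne.symm h1.1)
    have hxY : x ∉ Y := fun h => lt_irrefl _ (hlt x h)
    refine ⟨insert x Y, ?_, by rw [Finset.card_insert_of_notMem hxY, hYc],
      Function.update d x col, ?_⟩
    · intro z hz
      rcases Finset.mem_insert.1 hz with rfl | hz
      · exact hxX
      · exact Finset.mem_of_mem_erase (hY'X (hYY' hz))
    · intro z hz S hS hSc hzS
      have hxS : x ∉ S := by
        intro h
        have h1 := hzS x h
        rcases Finset.mem_insert.1 hz with h2 | h2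
        · omega
        · have := hlt z h2; omega
      have hSY : S ⊆ Y := (Finset.subset_insert_iff_of_notMem hxS).1 hS
      rcases Finset.mem_insert.1 hz with h2 | h2
      · rw [h2, Function.update_self]
        exact hcol S (hSY.trans hYY') hSc
      · have : z ≠ x := fun h => hxY (h ▸ h2)
        rw [Function.update_of_ne this]
        exact hd z h2 S hSY hSc hzS

/-- The finite Ramsey theorem. -/
lemma finite_ramsey (K : Type) [Finite K] [Nonempty K] (a : ℕ) :
    ∀ b : ℕ, ∃ N : ℕ, ∀ X : Finset ℕ, N ≤ X.card → ∀ c : Finset ℕ → K,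
      ∃ Y ⊆ X, Y.card = b ∧ ∃ col, ∀ S ⊆ Y, S.card = a → c S = col := by
  classical
  induction a with
  | zero =>
    intro b
    refine ⟨b, fun X hX c => ?_⟩
    obtain ⟨Y, hY, hYc⟩ := Finset.exists_subset_card_eq hX
    refine ⟨Y, hY, hYc, c ∅, fun S _ hS => ?_⟩
    rw [Finset.card_eq_zero.1 hS]
  | succ a ih =>
    intro b
    have := Fintype.ofFinite K
    obtain ⟨N, hN⟩ := ramsey_endhom a K ih (Fintype.card K * b)
    refine ⟨N, fun X hX c => ?_⟩
    obtain ⟨Y, hYX, hYc, d, hd⟩ := hN X hX c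
    obtain ⟨col, -, hcol⟩ := Finset.exists_le_card_fiber_of_mul_le_card_of_maps_to
      (s := Y) (t := (Finset.univ : Finset K)) (f := d) (n := b) (by simp)
      Finset.univ_nonempty (by rw [hYc, Finset.card_univ])
    obtain ⟨Z, hZ, hZc⟩ := Finset.exists_subset_card_eq hcol
    have hZY : Z ⊆ Y := hZ.trans (Finset.filter_subset _ _)
    refine ⟨Z, hZY.trans hYX, hZc, col, fun S hS hSc => ?_⟩
    have hne : S.Nonempty := by rw [← Finset.card_pos]; omega
    have hm := S.min'_mem hne
    rw [← Finset.insert_erase hm, hd _ (hZY (hS hm)) _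
      ((Finset.erase_subset _ _).trans (hS.trans hZY))
      (by rw [Finset.card_erase_of_mem hm]; omega)]
    · exact (Finset.mem_filter.1 (hZ (hS hm))).2
    · intro y hy
      exact S.min'_lt_of_mem_erase_min' hne hy

/-- The product Ramsey theorem. -/
lemma product_ramsey (K : Type) [Finite K] [Nonempty K] (a b n : ℕ) :
    ∃ N : Fin n → ℕ, ∀ c : (Fin n → Finset ℕ) → K,
      ∃ M : Fin n → Finset ℕ, (∀ i, M i ⊆ Finset.range (N i) ∧ (M i).card = b) ∧
        ∃ col, ∀ S : Fin n → Finset ℕ, (∀ i, S i ⊆ M i ∧ (S i).card = a) → c S = col := by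
  induction n with
  | zero =>
    refine ⟨fun _ => 0, fun c => ⟨fun _ => ∅, fun i => i.elim0, c (fun _ => ∅), fun S _ => ?_⟩⟩
    congr 1
    exact Subsingleton.elim _ _
  | succ n ih =>
    obtain ⟨N, hN⟩ := ih
    let T := (i : Fin n) → {x // x ∈ (Finset.range (N i)).powerset}
    obtain ⟨N0, hN0⟩ := finite_ramsey (T → K) a b
    refine ⟨Fin.cons N0 N, fun c => ?_⟩
    obtain ⟨M0, hM0, hM0c, κ, hκ⟩ := hN0 (Finset.range N0) (by simp)
      (fun S0 t => c (Fin.cons S0 (fun i => (t i).1)))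
    obtain ⟨M, hM, col, hcol⟩ := hN (fun S => κ (fun i => ⟨S i ∩ Finset.range (N i),
      Finset.mem_powerset.2 Finset.inter_subset_right⟩))
    refine ⟨Fin.cons M0 M, ?_, col, ?_⟩
    · intro i
      refine Fin.cases ?_ (fun j => ?_) i
      · simpa using ⟨hM0, hM0c⟩
      · simpa using hM j
    · intro S hS
      have h0 := hS 0
      have h1 : ∀ j : Fin n, S j.succ ⊆ M j ∧ (S j.succ).card = a := fun j => by
        simpa using hS j.succ
      rw [Fin.cons_zero] at h0
      rw [← hcol (fun j => S j.succ) h1, ← hκ (S 0) h0.1 h0.2]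
      dsimp only
      congr 1
      funext i
      refine Fin.cases ?_ (fun j => ?_) i
      · simp
      · simp only [Fin.cons_succ]
        exact (Finset.inter_eq_left.2 ((h1 j).1.trans (hM j).1)).symm

/-- A strictly monotone enumeration is determined by its range. -/
lemma mono_unique {A : Type} [Finite A] (r : A → A → Prop) (hr : IsStrictTotalOrder A r)
    (f g : A → ℕ) (hf : ∀ a b, r a b → f a < f b) (hg : ∀ a b, r a b → g a < g b)
    (h : Set.range f = Set.range g) : f = g := by
  classical
  let : LinearOrder A := linearOrderOfSTO r
  have hf' : StrictMono f := fun a b hab => hf a b hab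
  have hg' : StrictMono g := fun a b hab => hg a b hab
  exact (StrictMono.range_inj hf' hg').1 h

lemma mono_exists {B : Type} [Fintype B] (r : B → B → Prop) (hr : IsStrictTotalOrder B r)
    (M : Finset ℕ) (hM : M.card = Fintype.card B) :
    ∃ f : B → ℕ, (∀ a b, r a b → f a < f b) ∧ ∀ b, f b ∈ M := by
  classical
  let : LinearOrder B := linearOrderOfSTO r
  refine ⟨fun b => M.orderEmbOfFin hM ((monoEquivOfFin B rfl).symm b), fun a b hab => ?_,
    fun b => Finset.orderEmbOfFin_mem _ _ _⟩
  have : a < b := hab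
  simpa using this

/-- the class of finite sets with `n` linear orders has the Ramsey property:
for every `k ≥ 1` and finite structures `A` embeddable in `B`, there is a finite structure
`C` such that every `k`-colouring of the copies of `A` in `C` is constant on the copies of
`A` inside some copy of `B` in `C`. -/
theorem stmt_12 (n : ℕ) (hn : 2 ≤ n) (k : ℕ) (hk : 1 ≤ k)
    (A B : Type) [Fintype A] [Fintype B]
    (LA : Fin n → A → A → Prop) (LB : Fin n → B → B → Prop)
    (hLA : ∀ i, IsStrictTotalOrder A (LA i))
    (hLB : ∀ i, IsStrictTotalOrder B (LB i))
    (hAB : ∃ e : A → B, Function.Injective e ∧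
      ∀ i : Fin n, ∀ a b : A, LA i a b ↔ LB i (e a) (e b)) :
    ∃ (C : Type) (_ : Fintype C) (LC : Fin n → C → C → Prop),
      (∀ i, IsStrictTotalOrder C (LC i)) ∧
      ∀ c : Set C → Fin k,
        ∃ B₀ : Set C, IsCopy LB LC B₀ ∧
          ∃ col : Fin k, ∀ A₀ : Set C, A₀ ⊆ B₀ → IsCopy LA LC A₀ → c A₀ = col := by
  classical
  have : Nonempty (Fin k) := ⟨⟨0, hk⟩⟩
  obtain ⟨N, hN⟩ := product_ramsey (Fin k) (Fintype.card A) (Fintype.card B) n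
  let C := (i : Fin n) → Fin (N i)
  let key : (i : Fin n) → C → ℕ ×ₗ Fin (Fintype.card C) :=
    fun i x => toLex ((x i : ℕ), Fintype.equivFin C x)
  have hkey : ∀ i, Function.Injective (key i) := by
    intro i x y h
    have := congrArg (fun z => (ofLex z).2) h
    exact (Fintype.equivFin C).injective this
  let LC : Fin n → C → C → Prop := fun i x y => key i x < key i y
  have hLC : ∀ i, IsStrictTotalOrder C (LC i) := by
    intro i
    let emb : LC i ↪r ((· < ·) : (ℕ ×ₗ Fin (Fintype.card C)) → _ → Prop) :=
      ⟨⟨key i, hkey i⟩, Iff.rfl⟩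
    exact emb.isStrictTotalOrder
  have hLClt : ∀ i (x y : C), (x i : ℕ) < y i → LC i x y := by
    intro i x y h
    exact Prod.Lex.toLex_lt_toLex.2 (Or.inl h)
  refine ⟨C, inferInstance, LC, hLC, fun c => ?_⟩
  let good : (Fin n → Finset ℕ) → (A → C) → Prop := fun S e =>
    ∀ i, (∀ a b, LA i a b → (e a i : ℕ) < e b i) ∧
      Set.range (fun a => (e a i : ℕ)) = (S i : Set ℕ)
  have huniq : ∀ S e e', good S e → good S e' → e = e' := by
    intro S e e' h h'
    funext a i
    have := mono_unique (LA i) (hLA i) (fun a => (e a i : ℕ)) (fun a => (e' a i : ℕ))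
      (h i).1 (h' i).1 ((h i).2.trans (h' i).2.symm)
    exact Fin.ext (congrFun this a)
  obtain ⟨M, hM, col, hcol⟩ := hN (fun S =>
    if h : ∃ e, good S e then c (Set.range h.choose) else ⟨0, hk⟩)
  choose f hf hfM using fun i => mono_exists (LB i) (hLB i) (M i) (hM i).2
  let F : B → C := fun b i => ⟨f i b, Finset.mem_range.1 ((hM i).1 (hfM i b))⟩
  have hF : ∀ i a b, LB i a b ↔ LC i (F a) (F b) := by
    intro i a b
    have h1 : ∀ a b, LB i a b → LC i (F a) (F b) := fun a b h => hLClt i _ _ (hf i a b h)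
    refine ⟨h1 a b, fun h => ?_⟩
    have := hLB i
    rcases trichotomous_of (LB i) a b with h2 | h2 | h2
    · exact h2
    · subst h2; exact absurd h (lt_irrefl _)
    · exact absurd (h1 _ _ h2) (lt_asymm h)
  have hFinj : Function.Injective F := by
    intro a b h
    let i : Fin n := ⟨0, by omega⟩
    have := hLB i
    have h' : f i a = f i b := congrArg (fun z : C => (z i : ℕ)) h
    rcases trichotomous_of (LB i) a b with h2 | h2 | h2
    · have := hf i _ _ h2; omega
    · exact h2
    · have := hf i _ _ h2; omega
  refine ⟨Set.range F, ⟨F, rfl, hFinj, hF⟩, col, ?_⟩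
  rintro A₀ hA₀ ⟨e, rfl, heinj, he⟩
  have hφ : ∀ a, ∃ b, F b = e a := fun a => hA₀ ⟨a, rfl⟩
  choose φ hφ using hφ
  have hmono : ∀ i a b, LA i a b → (e a i : ℕ) < e b i := by
    intro i a b h
    rw [he i, ← hφ a, ← hφ b, ← hF] at h
    rw [← hφ a, ← hφ b]
    exact hf i _ _ h
  let S : Fin n → Finset ℕ := fun i => Finset.univ.image (fun a => (e a i : ℕ))
  have hS : good S e := fun i => ⟨hmono i, by simp [S]⟩
  have hSM : ∀ i, S i ⊆ M i ∧ (S i).card = Fintype.card A := by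
    intro i
    constructor
    · intro x hx
      obtain ⟨a, -, rfl⟩ := Finset.mem_image.1 hx
      rw [← hφ a]
      exact hfM i _
    · rw [Finset.card_image_of_injective, Finset.card_univ]
      intro a b h
      have h' : (e a i : ℕ) = e b i := h
      have := hLA i
      rcases trichotomous_of (LA i) a b with h2 | h2 | h2
      · have := hmono i _ _ h2; omega
      · exact h2
      · have := hmono i _ _ h2; omega
  have hex : ∃ e, good S e := ⟨e, hS⟩
  have := hcol S hSM
  rw [dif_pos hex, huniq S _ e hex.choose_spec hS] at this
  exact this
end

section
/- Let n ≥ 2 and let (L_1,<_1),...,(L_n,<_n) be linear orders, each with at least two elements. Let < be the product order on L_1 × ... × L_n. If ≺_1,...,≺_n are linear orders on L_1 × ... × L_n whose intersection is <, then there exists a permutation σ of {1,...,n} such that for all i ≤ n and all a, b ∈ L_1 × ... × L_n: if a_i <_i b_i then a ≺_σ(i) b. -/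
theorem aux_agree {n : ℕ} (f g : Fin n → Fin n) (hf : Function.Injective f)
    (hg : Function.Injective g) (i : Fin n) (h : ∀ k, k ≠ i → f k = g k) : f i = g i := by
  obtain ⟨k, hk⟩ := (Finite.injective_iff_surjective.mp hg) (f i)
  by_cases hki : k = i
  · rw [← hk, hki]
  · exact absurd (hf ((h k hki).trans hk)) hki

/-- if `≺_1, …, ≺_n` are linear orders on a product `L_1 × ⋯ × L_n` of linear
orders (each with at least two elements) whose intersection is the product order, then some
permutation `σ` of `{1,…,n}` satisfies: `a_i <_i b_i` implies `a ≺_{σ(i)} b`. -/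
theorem stmt_15 (n : ℕ) (hn : 2 ≤ n)
    (L : Fin n → Type) [∀ i, LinearOrder (L i)]
    (hL : ∀ i, ∃ a b : L i, a ≠ b)
    (R : Fin n → (∀ i, L i) → (∀ i, L i) → Prop)
    (hR : ∀ j, IsStrictTotalOrder (∀ i, L i) (R j))
    (hreal : ∀ a b : ∀ i, L i, ((∀ i, a i ≤ b i) ∧ a ≠ b) ↔ ∀ j, R j a b) :
    ∃ σ : Equiv.Perm (Fin n),
      ∀ (i : Fin n) (a b : ∀ i, L i), a i < b i → R (σ i) a b := by
  classical
  have hle1 : ∀ j (a b c : ∀ i, L i), (∀ i, a i ≤ b i) → R j b c → R j a c := by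
    intro j a b c hab hbc
    by_cases e : a = b
    · rw [e]; exact hbc
    · exact (hR j).toIsStrictOrder.toIsTrans.trans _ _ _ ((hreal a b).1 ⟨hab, e⟩ j) hbc
  have hle2 : ∀ j (a b c : ∀ i, L i), R j a b → (∀ i, b i ≤ c i) → R j a c := by
    intro j a b c hab hbc
    by_cases e : b = c
    · rw [← e]; exact hab
    · exact (hR j).toIsStrictOrder.toIsTrans.trans _ _ _ hab ((hreal b c).1 ⟨hbc, e⟩ j)
  have hirr : ∀ j a, ¬ R j a a := fun j a => (hR j).toIsStrictOrder.toIrrefl.irrefl a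
  have htri : ∀ j a b, a ≠ b → ¬ R j b a → R j a b := by
    intro j a b hne h
    by_contra h2
    exact hne ((hR j).toTrichotomous.trichotomous a b h2 h)
  -- existence of an index reversing each critical pair
  have hex : ∀ (l h x y : ∀ i, L i), (∀ k, x k < y k) → ∃ f : Fin n → Fin n,
      ∀ k, R (f k) (Function.update h k (x k)) (Function.update l k (y k)) := by
    intro l h x y hxy
    have : ∀ k, ∃ j, R j (Function.update h k (x k)) (Function.update l k (y k)) := by
      intro k
      by_contra hc
      push Not at hc
      have hne : Function.update h k (x k) ≠ Function.update l k (y k) := by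
        intro e
        have := congrFun e k
        simp only [Function.update_self] at this
        exact (hxy k).ne this
      have h1 := (hreal (Function.update l k (y k)) (Function.update h k (x k))).2
        (fun j => htri j _ _ hne.symm (hc j))
      have h2 := h1.1 k
      simp only [Function.update_self] at h2
      exact absurd h2 (not_le.2 (hxy k))
    choose f hf using this
    exact ⟨f, hf⟩
  have hinj : ∀ (l h x y : ∀ i, L i), (∀ k, l k ≤ x k) → (∀ k, y k ≤ h k) →
      (∀ k, x k < y k) → ∀ f : Fin n → Fin n,
      (∀ k, R (f k) (Function.update h k (x k)) (Function.update l k (y k))) →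
      Function.Injective f := by
    intro l h x y hlx hyh hxy f hf k m hkm
    by_contra hne
    have key : ∀ k m, k ≠ m → ∀ i, Function.update l k (y k) i ≤ Function.update h m (x m) i := by
      intro k m hne i
      have hlh : l i ≤ h i := (hlx i).trans ((hxy i).le.trans (hyh i))
      by_cases h1 : i = k
      · subst h1
        simpa [Function.update_of_ne hne] using hyh i
      · by_cases h2 : i = m
        · subst h2
          simpa [Function.update_of_ne h1] using hlx i
        · simpa [Function.update_of_ne h1, Function.update_of_ne h2] using hlh
    have h1 := hle2 _ _ _ _ (hf k) (key k m hne)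
    have h2 := hle2 _ _ _ _ (hf m) (key m k (Ne.symm hne))
    rw [← hkm] at h2
    exact hirr _ _ ((hR (f k)).toIsStrictOrder.toIsTrans.trans _ _ _ h1 h2)
  have hb : ∀ i, ∃ p : L i × L i, p.1 < p.2 := by
    intro i
    obtain ⟨a, b, hab⟩ := hL i
    rcases lt_or_gt_of_ne hab with h | h
    · exact ⟨(a, b), h⟩
    · exact ⟨(b, a), h⟩
  choose p hp using hb
  set l0 : ∀ i, L i := fun i => (p i).1 with hl0
  set h0 : ∀ i, L i := fun i => (p i).2 with hh0
  have h00 : ∀ k, l0 k < h0 k := hp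
  obtain ⟨s, hs⟩ := hex l0 h0 l0 h0 h00
  have hsinj := hinj l0 h0 l0 h0 (fun _ => le_rfl) (fun _ => le_rfl) h00 s hs
  refine ⟨Equiv.ofBijective s (Finite.injective_iff_bijective.mp hsinj), ?_⟩
  intro i a b hab
  change R (s i) a b
  set l : ∀ i, L i := fun k => min (l0 k) (min (a k) (b k)) with hl
  set h : ∀ i, L i := fun k => max (h0 k) (max (a k) (b k)) with hh
  have ll0 : ∀ k, l k ≤ l0 k := fun k => min_le_left _ _
  have lla : ∀ k, l k ≤ a k := fun k => (min_le_right _ _).trans (min_le_left _ _)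
  have llb : ∀ k, l k ≤ b k := fun k => (min_le_right _ _).trans (min_le_right _ _)
  have hgh0 : ∀ k, h0 k ≤ h k := fun k => le_max_left _ _
  have hga : ∀ k, a k ≤ h k := fun k => (le_max_left _ _).trans (le_max_right _ _)
  have hgb : ∀ k, b k ≤ h k := fun k => (le_max_right _ _).trans (le_max_right _ _)
  have hupd : ∀ (u v : ∀ i, L i) (k : Fin n) (z w : L k), (∀ m, m ≠ k → u m ≤ v m) → z ≤ w →
      ∀ m, Function.update u k z m ≤ Function.update v k w m := by
    intro u v k z w huv hzw m
    by_cases e : m = k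
    · subst e; simpa using hzw
    · simpa [Function.update_of_ne e] using huv m e
  have hxy : ∀ k, Function.update l0 i (a i) k < Function.update h0 i (b i) k := by
    intro k
    by_cases e : k = i
    · subst e; simpa using hab
    · simpa [Function.update_of_ne e] using h00 k
  obtain ⟨f, hf⟩ := hex l h _ _ hxy
  have hfinj : Function.Injective f := by
    refine hinj l h _ _ ?_ ?_ hxy f hf
    · intro k
      by_cases e : k = i
      · subst e; simpa using lla k
      · simpa [Function.update_of_ne e] using ll0 k
    · intro k
      by_cases e : k = i
      · subst e; simpa using hgb k
      · simpa [Function.update_of_ne e] using hgh0 k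
  have hoff : ∀ k, k ≠ i → f k = s k := by
    intro k hk
    have hfk := hf k
    rw [Function.update_of_ne hk, Function.update_of_ne hk] at hfk
    have hfk' : R (f k) (Function.update h0 k (l0 k)) (Function.update l0 k (h0 k)) :=
      hle2 _ _ _ _ (hle1 _ _ _ _ (hupd _ _ k _ _ (fun m _ => hgh0 m) le_rfl) hfk)
        (hupd _ _ k _ _ (fun m _ => ll0 m) le_rfl)
    have hg := hinj l0 h0 l0 h0 (fun _ => le_rfl) (fun _ => le_rfl) h00
      (Function.update s k (f k)) (by
        intro m
        by_cases e : m = k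
        · subst e; rw [Function.update_self]; exact hfk'
        · rw [Function.update_of_ne e]; exact hs m)
    have := aux_agree _ s hg hsinj k (fun m hm => Function.update_of_ne hm _ _)
    rwa [Function.update_self] at this
  have hfi : f i = s i := aux_agree f s hfinj hsinj i hoff
  have hr := hf i
  rw [Function.update_self, Function.update_self, hfi] at hr
  refine hle2 _ _ _ _ (hle1 _ _ _ _ ?_ hr) ?_
  · have := hupd a h i (a i) (a i) (fun m _ => hga m) le_rfl
    rwa [Function.update_eq_self] at this
  · have := hupd l b i (b i) (b i) (fun m _ => llb m) le_rfl
    rwa [Function.update_eq_self] at this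
end

section
/- Let n ≥ 2 and let D ⊆ ℚ^n be a Manaster–Remmel set. If ≺_1,...,≺_n are linear orders on D whose intersection is the restriction to D of the product order, then there exists a permutation σ of {1,...,n} such that for all i ≤ n and all a, b ∈ D: a_i < b_i iff a ≺_σ(i) b. That is, every n-tuple of realizers of the product order on D is a permutation of the n coordinate orders. -/
theorem mr_pick {n : ℕ} {D : Set (Fin n → ℚ)} (hD : Dense D) (l u : Fin n → ℚ)
    (h : ∀ i, l i < u i) : ∃ d : ↥D, ∀ i, l i < (d : Fin n → ℚ) i ∧ (d : Fin n → ℚ) i < u i := by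
  have ho : IsOpen (Set.pi Set.univ (fun i => Set.Ioo (l i) (u i))) :=
    isOpen_set_pi Set.finite_univ (fun i _ => isOpen_Ioo)
  have hne : (Set.pi Set.univ (fun i => Set.Ioo (l i) (u i))).Nonempty :=
    ⟨fun i => (l i + u i) / 2, fun i _ => ⟨by have := h i; linarith, by have := h i; linarith⟩⟩
  obtain ⟨x, hx, hxD⟩ := hD.inter_open_nonempty _ ho hne
  exact ⟨⟨x, hxD⟩, fun i => hx i (Set.mem_univ i)⟩

/-- `(a, b)` is critical in coordinate `i`. -/
def MRCrit {n : ℕ} (i : Fin n) (a b : Fin n → ℚ) : Prop :=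
  b i < a i ∧ ∀ k, k ≠ i → a k < b k

theorem stmt_17 (n : ℕ) (hn : 2 ≤ n) (D : Set (Fin n → ℚ)) (hD : MRSet n D)
    (R : Fin n → ↥D → ↥D → Prop)
    (hR : ∀ i, IsStrictTotalOrder ↥D (R i))
    (hreal : ∀ a b : ↥D, ProdLt (a : Fin n → ℚ) (b : Fin n → ℚ) ↔ ∀ j, R j a b) :
    ∃ σ : Equiv.Perm (Fin n),
      ∀ (i : Fin n) (a b : ↥D),
        (a : Fin n → ℚ) i < (b : Fin n → ℚ) i ↔ R (σ i) a b := by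
  have htr : ∀ j a b c, R j a b → R j b c → R j a c := fun j a b c h1 h2 =>
    (hR j).toIsStrictOrder.toIsTrans.trans a b c h1 h2
  have hirr : ∀ j a, ¬ R j a a := fun j a => (hR j).toIsStrictOrder.toIrrefl.irrefl a
  have htri : ∀ j a b, ¬ R j a b → a ≠ b → R j b a := fun j a b h1 h2 => by
    by_contra h3
    exact h2 ((hR j).toTrichotomous.trichotomous a b h1 h3)
  have hlt : ∀ a b : ↥D, (∀ k, a.1 k < b.1 k) → ∀ j, R j a b := fun a b h =>
    (hreal a b).1 ⟨fun i => (h i).le, fun e => by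
      have := h ⟨0, by omega⟩
      rw [e] at this; exact lt_irrefl _ this⟩
  have hex : ∀ i (a b : ↥D), MRCrit i a.1 b.1 → ∃ j, R j b a := fun i a b h => by
    by_contra! hc
    have hne : b ≠ a := fun e => by have := h.1; rw [e] at this; exact lt_irrefl _ this
    have := ((hreal a b).2 fun j => htri j b a (hc j) hne).1 i
    exact absurd h.1 (not_lt.2 this)
  have halt : ∀ j (a b c d : ↥D), R j b a → R j d c → (∀ k, a.1 k < d.1 k) →
      (∀ k, c.1 k < b.1 k) → False := fun j a b c d h1 h2 h3 h4 =>
    hirr j b (htr j _ _ _ h1 (htr j _ _ _ (hlt a d h3 j) (htr j _ _ _ h2 (hlt c b h4 j))))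
  have hfam : ∀ (i : Fin n) (lo hi : Fin n → ℚ), (∀ k, k ≠ i → lo k < hi k) →
      ∃ c d : Fin n → ↥D, ∀ k, k ≠ i → MRCrit k (c k).1 (d k).1 ∧
        (∀ l, (c k).1 l < hi l) ∧ (∀ l, lo l < (d k).1 l) ∧
        ∀ m, m ≠ i → m ≠ k → ∀ l, (c k).1 l < (d m).1 l := by
    intro i lo hi h
    have hc : ∀ k, ∃ c : ↥D, k ≠ i → ((lo k + hi k) / 2 < c.1 k ∧ c.1 k < hi k ∧
        ∀ l, l ≠ k → c.1 l < min (lo l) (hi l)) := by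
      intro k
      by_cases hk : k = i
      · obtain ⟨c, -⟩ := mr_pick hD.1 (fun _ => 0) (fun _ => 1) (by simp)
        exact ⟨c, fun h => absurd hk h⟩
      obtain ⟨c, hc⟩ := mr_pick hD.1
        (fun l => if l = k then (lo k + hi k) / 2 else min (lo l) (hi l) - 1)
        (fun l => if l = k then hi k else min (lo l) (hi l)) (by
          intro l
          have := h k hk
          try dsimp only
          split_ifs
          · linarith
          · linarith)
      refine ⟨c, fun _ => ⟨by simpa using (hc k).1, by simpa using (hc k).2, fun l hl => ?_⟩⟩
      have := (hc l).2
      rwa [if_neg hl] at this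
    have hd : ∀ k, ∃ c : ↥D, k ≠ i → (lo k < c.1 k ∧ c.1 k < (lo k + hi k) / 2 ∧
        ∀ l, l ≠ k → max (lo l) (hi l) < c.1 l) := by
      intro k
      by_cases hk : k = i
      · obtain ⟨c, -⟩ := mr_pick hD.1 (fun _ => 0) (fun _ => 1) (by simp)
        exact ⟨c, fun h => absurd hk h⟩
      obtain ⟨c, hc⟩ := mr_pick hD.1
        (fun l => if l = k then lo k else max (lo l) (hi l))
        (fun l => if l = k then (lo k + hi k) / 2 else max (lo l) (hi l) + 1) (by
          intro l
          have := h k hk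
          try dsimp only
          split_ifs
          · linarith
          · linarith)
      refine ⟨c, fun _ => ⟨by simpa using (hc k).1, by simpa using (hc k).2, fun l hl => ?_⟩⟩
      have := (hc l).1
      rwa [if_neg hl] at this
    choose c hc using hc
    choose d hd using hd
    refine ⟨c, d, fun k hk => ?_⟩
    obtain ⟨c1, c2, c3⟩ := hc k hk
    obtain ⟨d1, d2, d3⟩ := hd k hk
    refine ⟨⟨d2.trans c1, fun l hl => ?_⟩, fun l => ?_, fun l => ?_, fun m hm hmk l => ?_⟩
    · exact (c3 l hl).trans_le ((min_le_left _ _).trans ((le_max_left _ _).trans (d3 l hl).le))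
    · by_cases hl : l = k
      · subst hl; exact c2
      · exact (c3 l hl).trans_le (min_le_right _ _)
    · by_cases hl : l = k
      · subst hl; exact d1
      · exact (le_max_left _ _).trans_lt (d3 l hl)
    · obtain ⟨e1, e2, e3⟩ := hd m hm
      by_cases hl : l = k
      · subst hl
        exact c2.trans ((le_max_right _ _).trans_lt (e3 l (Ne.symm hmk)))
      · by_cases hl' : l = m
        · subst hl'
          exact ((c3 l hl).trans_le (min_le_left _ _)).trans e1
        · exact (c3 l hl).trans_le ((min_le_left _ _).trans ((le_max_left _ _).trans (e3 l hl').le))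
  have hA : ∀ i (a b a' b' : ↥D) j j', MRCrit i a.1 b.1 → MRCrit i a'.1 b'.1 →
      (∀ k, k ≠ i → a.1 k < b'.1 k ∧ a'.1 k < b.1 k) → R j b a → R j' b' a' → j = j' := by
    intro i a b a' b' j j' h h' hov hj hj'
    obtain ⟨c, d, hcd⟩ := hfam i (fun k => max (a.1 k) (a'.1 k)) (fun k => min (b.1 k) (b'.1 k))
      (fun k hk => max_lt (lt_min (h.2 k hk) (hov k hk).1) (lt_min (hov k hk).2 (h'.2 k hk)))
    have ht : ∀ k, ∃ t, k ≠ i → R t (d k) (c k) := fun k => by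
      by_cases hk : k = i
      · exact ⟨i, fun h => absurd hk h⟩
      · obtain ⟨t, ht⟩ := hex k _ _ (hcd k hk).1
        exact ⟨t, fun _ => ht⟩
    choose t ht using ht
    have hne : ∀ k, k ≠ i → t k ≠ j := fun k hk e => by
      subst e
      exact halt _ a b (c k) (d k) hj (ht k hk)
        (fun l => (le_max_left _ _).trans_lt ((hcd k hk).2.2.1 l))
        (fun l => ((hcd k hk).2.1 l).trans_le (min_le_left _ _))
    have hne' : ∀ k, k ≠ i → t k ≠ j' := fun k hk e => by
      subst e
      exact halt _ a' b' (c k) (d k) hj' (ht k hk)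
        (fun l => (le_max_right _ _).trans_lt ((hcd k hk).2.2.1 l))
        (fun l => ((hcd k hk).2.1 l).trans_le (min_le_right _ _))
    have hinj : Function.Injective (fun k => if k = i then j else t k) := by
      intro k m hkm
      dsimp only at hkm
      by_cases hk : k = i <;> by_cases hm : m = i
      · rw [hk, hm]
      · rw [if_pos hk, if_neg hm] at hkm
        exact absurd hkm.symm (hne m hm)
      · rw [if_neg hk, if_pos hm] at hkm
        exact absurd hkm (hne k hk)
      · rw [if_neg hk, if_neg hm] at hkm
        by_contra hc
        have h1 := ht k hk
        rw [hkm] at h1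
        exact halt _ _ _ _ _ h1 (ht m hm) ((hcd k hk).2.2.2 m hm (Ne.symm hc))
          ((hcd m hm).2.2.2 k hk hc)
    obtain ⟨k, hk⟩ := Finite.surjective_of_injective hinj j'
    dsimp only at hk
    by_cases hki : k = i
    · rwa [if_pos hki] at hk
    · rw [if_neg hki] at hk
      exact absurd hk (hne' k hki)
  have hB : ∀ i (a b a' b' : ↥D) j j', MRCrit i a.1 b.1 → MRCrit i a'.1 b'.1 →
      R j b a → R j' b' a' → j = j' := by
    intro i a b a' b' j j' h h' hj hj'
    obtain ⟨x, hx⟩ := mr_pick hD.1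
      (fun k => if k = i then 1 else min (a.1 k) (a'.1 k) - 1)
      (fun k => if k = i then 2 else min (a.1 k) (a'.1 k)) (by
        intro k; split_ifs <;> linarith)
    obtain ⟨y, hy⟩ := mr_pick hD.1
      (fun k => if k = i then 0 else max (b.1 k) (b'.1 k))
      (fun k => if k = i then 1 else max (b.1 k) (b'.1 k) + 1) (by
        intro k; split_ifs <;> linarith)
    have hx' : ∀ k, k ≠ i → x.1 k < min (a.1 k) (a'.1 k) := fun k hk => by
      have := (hx k).2; rwa [if_neg hk] at this
    have hy' : ∀ k, k ≠ i → max (b.1 k) (b'.1 k) < y.1 k := fun k hk => by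
      have := (hy k).1; rwa [if_neg hk] at this
    have e1 : ∀ k, k ≠ i → x.1 k < b.1 k := fun k hk =>
      ((hx' k hk).trans_le (min_le_left _ _)).trans (h.2 k hk)
    have e2 : ∀ k, k ≠ i → x.1 k < b'.1 k := fun k hk =>
      ((hx' k hk).trans_le (min_le_right _ _)).trans (h'.2 k hk)
    have e3 : ∀ k, k ≠ i → b.1 k < y.1 k := fun k hk =>
      (le_max_left _ _).trans_lt (hy' k hk)
    have e4 : ∀ k, k ≠ i → b'.1 k < y.1 k := fun k hk =>
      (le_max_right _ _).trans_lt (hy' k hk)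
    have hxy : MRCrit i x.1 y.1 := ⟨by
      have h1 := (hx i).1
      have h2 := (hy i).2
      simp only [if_true] at h1 h2
      exact h2.trans h1, fun k hk => (e1 k hk).trans (e3 k hk)⟩
    obtain ⟨m, hm⟩ := hex i _ _ hxy
    exact (hA i a b x y j m h hxy (fun k hk => ⟨(h.2 k hk).trans (e3 k hk), e1 k hk⟩) hj hm).trans
      (hA i a' b' x y j' m h' hxy (fun k hk => ⟨(h'.2 k hk).trans (e4 k hk), e2 k hk⟩) hj' hm).symm
  have hc : ∀ k : Fin n, ∃ c : ↥D, (0 < c.1 k ∧ c.1 k < 1) ∧ ∀ l, l ≠ k → c.1 l < -1 := by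
    intro k
    obtain ⟨c, hc⟩ := mr_pick hD.1 (fun l => if l = k then 0 else -2)
      (fun l => if l = k then 1 else -1) (by intro l; split_ifs <;> norm_num)
    refine ⟨c, by simpa using hc k, fun l hl => ?_⟩
    have := (hc l).2; rwa [if_neg hl] at this
  have hd : ∀ k : Fin n, ∃ c : ↥D, (-1 < c.1 k ∧ c.1 k < 0) ∧ ∀ l, l ≠ k → 1 < c.1 l := by
    intro k
    obtain ⟨c, hc⟩ := mr_pick hD.1 (fun l => if l = k then -1 else 1)
      (fun l => if l = k then 0 else 2) (by intro l; split_ifs <;> norm_num)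
    refine ⟨c, by simpa using hc k, fun l hl => ?_⟩
    have := (hc l).1; rwa [if_neg hl] at this
  choose c hc using hc
  choose d hd using hd
  have hcrit : ∀ k, MRCrit k (c k).1 (d k).1 := fun k =>
    ⟨by linarith [(hc k).1.1, (hd k).1.2], fun l hl => by linarith [(hc k).2 l hl, (hd k).2 l hl]⟩
  have hcd : ∀ k m, k ≠ m → ∀ l, (c k).1 l < (d m).1 l := by
    intro k m hkm l
    by_cases hl : l = k
    · subst hl; linarith [(hc l).1.2, (hd m).2 l hkm]
    · by_cases hm : l = m
      · subst hm; linarith [(hc k).2 l hl, (hd l).1.1]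
      · linarith [(hc k).2 l hl, (hd m).2 l hm]
  choose s hs using fun k => hex k _ _ (hcrit k)
  have hsinj : Function.Injective s := by
    intro k m hkm
    by_contra hne
    have h1 := hs k
    rw [hkm] at h1
    exact halt _ _ _ _ _ h1 (hs m) (hcd k m hne) (hcd m k (Ne.symm hne))
  have hall : ∀ i (a b : ↥D), MRCrit i a.1 b.1 → R (s i) b a := by
    intro i a b h
    obtain ⟨j, hj⟩ := hex i a b h
    rwa [hB i _ _ _ _ _ _ (hcrit i) h (hs i) hj]
  have hfwd : ∀ i (a b : ↥D), a.1 i < b.1 i → R (s i) a b := by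
    intro i a b h
    obtain ⟨x, hx⟩ := mr_pick hD.1
      (fun k => if k = i then a.1 i else max (a.1 k) (b.1 k))
      (fun k => if k = i then (a.1 i + b.1 i) / 2 else max (a.1 k) (b.1 k) + 1) (by
        intro k; split_ifs <;> linarith)
    obtain ⟨y, hy⟩ := mr_pick hD.1
      (fun k => if k = i then (a.1 i + b.1 i) / 2 else min (a.1 k) (b.1 k) - 1)
      (fun k => if k = i then b.1 i else min (a.1 k) (b.1 k)) (by
        intro k; split_ifs <;> linarith)
    have hxi := hx i
    have hyi := hy i
    simp only [if_true] at hxi hyi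
    have hx' : ∀ k, k ≠ i → max (a.1 k) (b.1 k) < x.1 k := fun k hk => by
      have := (hx k).1; rwa [if_neg hk] at this
    have hy' : ∀ k, k ≠ i → y.1 k < min (a.1 k) (b.1 k) := fun k hk => by
      have := (hy k).2; rwa [if_neg hk] at this
    have hax : ∀ k, a.1 k < x.1 k := fun k => by
      by_cases hk : k = i
      · rw [hk]; exact hxi.1
      · exact (le_max_left _ _).trans_lt (hx' k hk)
    have hyb : ∀ k, y.1 k < b.1 k := fun k => by
      by_cases hk : k = i
      · rw [hk]; exact hyi.2
      · exact (hy' k hk).trans_le (min_le_right _ _)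
    have hcr : MRCrit i y.1 x.1 := ⟨hxi.2.trans hyi.1, fun k hk =>
      ((hy' k hk).trans_le (min_le_left _ _)).trans (hax k)⟩
    exact htr _ _ _ _ (hlt a x hax _) (htr _ _ _ _ (hall i y x hcr) (hlt y b hyb _))
  refine ⟨Equiv.ofBijective s (Finite.injective_iff_bijective.1 hsinj), fun i a b => ?_⟩
  rw [Equiv.ofBijective_apply]
  refine ⟨hfwd i a b, fun h => ?_⟩
  by_contra hn'
  have hne : a ≠ b := fun e => by subst e; exact hirr _ _ h
  have hne2 := hD.2 a.1 a.2 b.1 b.2 (fun e => hne (Subtype.ext e)) i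
  have := hfwd i b a (lt_of_le_of_ne (not_lt.1 hn') (Ne.symm hne2))
  exact hirr _ _ (htr _ _ _ _ h this)
end

section
/- Let n ≥ 2 and let D ⊆ ℚ^n be a Manaster–Remmel set, with < the restriction to D of the product order and <_1,...,<_n its coordinate orders. Let G be the group of all bijections g : D → D with a < b iff g(a) < g(b). Then G acts transitively on the set R_n of all n-tuples (≺_1,...,≺_n) of linear orders on D whose intersection is <, via the logic action (g·(≺_1,...,≺_n)) = (≺_1^g,...,≺_n^g) where a ≺_i^g b iff g⁻¹(a) ≺_i g⁻¹(b); in particular this action is well-defined (it sends realizer tuples to realizer tuples), and for every (≺_1,...,≺_n) ∈ R_n there is g ∈ G with a ≺_i b iff g⁻¹(a) <_i g⁻¹(b) for all i ≤ n and a, b ∈ D. -/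
/-- `g` is an automorphism of `(D, <)`: it preserves and reflects the product order. -/
def PresProd (n : ℕ) (D : Set (Fin n → ℚ)) (g : Equiv.Perm ↥D) : Prop :=
  ∀ a b : ↥D, ProdLt (a : Fin n → ℚ) (b : Fin n → ℚ) ↔
    ProdLt (g a : Fin n → ℚ) (g b : Fin n → ℚ)

/-- `R` is an `n`-tuple of linear orders on `D` whose intersection is the product order. -/
def IsRealizer (n : ℕ) (D : Set (Fin n → ℚ)) (R : Fin n → ↥D → ↥D → Prop) : Prop :=
  (∀ i, IsStrictTotalOrder ↥D (R i)) ∧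
    ∀ a b : ↥D, ProdLt (a : Fin n → ℚ) (b : Fin n → ℚ) ↔ ∀ j, R j a b


namespace MRaux

theorem box {n : ℕ} {D : Set (Fin n → ℚ)} (hD : MRSet n D) (l u : Fin n → ℚ)
    (h : ∀ i, l i < u i) : ∃ d : ↥D, ∀ i, l i < d.1 i ∧ d.1 i < u i := by
  have ho : IsOpen (Set.pi Set.univ (fun i => Set.Ioo (l i) (u i))) :=
    isOpen_set_pi Set.finite_univ (fun i _ => isOpen_Ioo)
  have hne : (Set.pi Set.univ (fun i => Set.Ioo (l i) (u i))).Nonempty := by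
    refine ⟨fun i => (l i + u i) / 2, fun i _ => ⟨?_, ?_⟩⟩ <;> have := h i <;> simp only <;> linarith
  obtain ⟨x, hx, hxD⟩ := hD.1.inter_open_nonempty _ ho hne
  exact ⟨⟨x, hxD⟩, fun i => hx i (Set.mem_univ i)⟩

theorem coord_ne {n : ℕ} {D : Set (Fin n → ℚ)} (hD : MRSet n D) {a b : ↥D} (h : a ≠ b)
    (i : Fin n) : a.1 i ≠ b.1 i :=
  hD.2 a.1 a.2 b.1 b.2 (fun h' => h (Subtype.ext h')) i

theorem prodLt_iff {n : ℕ} (hn : 2 ≤ n) {D : Set (Fin n → ℚ)} (hD : MRSet n D) (a b : ↥D) :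
    ProdLt (a : Fin n → ℚ) (b : Fin n → ℚ) ↔ ∀ i, a.1 i < b.1 i := by
  constructor
  · rintro ⟨h1, h2⟩ i
    exact lt_of_le_of_ne (h1 i) (hD.2 a.1 a.2 b.1 b.2 h2 i)
  · intro h
    refine ⟨fun i => (h i).le, fun h' => ?_⟩
    have := h ⟨0, by omega⟩
    rw [h'] at this
    exact lt_irrefl _ this

/-! Back and forth -/

def Good {n : ℕ} {D : Set (Fin n → ℚ)} (σ : Equiv.Perm (Fin n)) (f : Finset (↥D × ↥D)) : Prop :=
  ∀ p ∈ f, ∀ q ∈ f, ∀ i, p.1.1 (σ i) < q.1.1 (σ i) ↔ p.2.1 i < q.2.1 i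

theorem ext_fwd {n : ℕ} {D : Set (Fin n → ℚ)} (hD : MRSet n D) (σ : Equiv.Perm (Fin n))
    (f : Finset (↥D × ↥D)) (hf : Good σ f) (a : ↥D) :
    ∃ g : Finset (↥D × ↥D), Good σ g ∧ f ⊆ g ∧ ∃ b, (a, b) ∈ g := by
  classical
  by_cases ha : ∃ b, (a, b) ∈ f
  · exact ⟨f, hf, subset_rfl, ha⟩
  have hne : ∀ p ∈ f, ∀ i, p.1.1 i ≠ a.1 i := by
    intro p hp i
    refine coord_ne hD ?_ i
    rintro rfl
    exact ha ⟨p.2, hp⟩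
  have key : ∀ i, ∃ l u : ℚ, l < u ∧ (∀ p ∈ f, p.1.1 (σ i) < a.1 (σ i) → p.2.1 i < l) ∧
      (∀ p ∈ f, a.1 (σ i) < p.1.1 (σ i) → u < p.2.1 i) := by
    intro i
    let lo := (f.filter (fun p => p.1.1 (σ i) < a.1 (σ i))).image (fun p => p.2.1 i)
    let hi := (f.filter (fun p => a.1 (σ i) < p.1.1 (σ i))).image (fun p => p.2.1 i)
    have h1 : ∀ x ∈ lo, ∀ y ∈ hi, x < y := by
      intro x hx y hy
      simp only [lo, hi, Finset.mem_image, Finset.mem_filter] at hx hy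
      obtain ⟨p, ⟨hp, hpa⟩, rfl⟩ := hx
      obtain ⟨q, ⟨hq, hqa⟩, rfl⟩ := hy
      exact (hf p hp q hq i).1 (hpa.trans hqa)
    obtain ⟨m, hm1, hm2⟩ := Order.exists_between_finsets lo hi h1
    obtain ⟨m', hm1', hm2'⟩ := Order.exists_between_finsets {m} hi (by simpa using hm2)
    refine ⟨m, m', hm1' m (by simp), fun p hp h => hm1 _ ?_, fun p hp h => hm2' _ ?_⟩
    · exact Finset.mem_image.2 ⟨p, Finset.mem_filter.2 ⟨hp, h⟩, rfl⟩
    · exact Finset.mem_image.2 ⟨p, Finset.mem_filter.2 ⟨hp, h⟩, rfl⟩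
  choose l u hlu hl hu using key
  obtain ⟨b, hb⟩ := box hD l u hlu
  have side1 : ∀ p ∈ f, ∀ i, p.1.1 (σ i) < a.1 (σ i) ↔ p.2.1 i < b.1 i := by
    intro p hp i
    rcases lt_or_gt_of_ne (hne p hp (σ i)) with h | h
    · exact ⟨fun _ => (hl i p hp h).trans (hb i).1, fun _ => h⟩
    · have := (hb i).2.trans (hu i p hp h)
      exact ⟨fun h' => absurd h' h.not_gt, fun h' => absurd h' this.not_gt⟩
  have side2 : ∀ p ∈ f, ∀ i, a.1 (σ i) < p.1.1 (σ i) ↔ b.1 i < p.2.1 i := by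
    intro p hp i
    rcases lt_or_gt_of_ne (hne p hp (σ i)) with h | h
    · have := (hl i p hp h).trans (hb i).1
      exact ⟨fun h' => absurd h' h.not_gt, fun h' => absurd h' this.not_gt⟩
    · exact ⟨fun _ => (hb i).2.trans (hu i p hp h), fun _ => h⟩
  refine ⟨insert (a, b) f, ?_, Finset.subset_insert _ _, b, Finset.mem_insert_self _ _⟩
  intro p hp q hq i
  rcases Finset.mem_insert.1 hp with rfl | hp <;> rcases Finset.mem_insert.1 hq with rfl | hq
  · simp
  · exact side2 q hq i
  · exact side1 p hp i
  · exact hf p hp q hq i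

theorem good_swap {n : ℕ} {D : Set (Fin n → ℚ)} (σ : Equiv.Perm (Fin n))
    (f g : Finset (↥D × ↥D)) (hf : Good σ f) (hg : ∀ p ∈ g, p.swap ∈ f) :
    Good σ.symm g := by
  intro p hp q hq i
  have := hf _ (hg p hp) _ (hg q hq) (σ.symm i)
  simp only [Prod.fst_swap, Prod.snd_swap, Equiv.apply_symm_apply] at this
  exact this.symm

theorem ext_bwd {n : ℕ} {D : Set (Fin n → ℚ)} (hD : MRSet n D) (σ : Equiv.Perm (Fin n))
    (f : Finset (↥D × ↥D)) (hf : Good σ f) (b : ↥D) :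
    ∃ g : Finset (↥D × ↥D), Good σ g ∧ f ⊆ g ∧ ∃ a, (a, b) ∈ g := by
  classical
  obtain ⟨g, hg, hfg, a, ha⟩ := ext_fwd hD σ.symm (f.image Prod.swap)
    (good_swap σ f _ hf (by
      intro p hp
      obtain ⟨q, hq, rfl⟩ := Finset.mem_image.1 hp
      simpa using hq)) b
  refine ⟨g.image Prod.swap, ?_, ?_, a, Finset.mem_image.2 ⟨_, ha, rfl⟩⟩
  · have := good_swap σ.symm g (g.image Prod.swap) hg (by
      intro p hp
      obtain ⟨q, hq, rfl⟩ := Finset.mem_image.1 hp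
      simpa using hq)
    simpa using this
  · intro p hp
    exact Finset.mem_image.2 ⟨p.swap, hfg (Finset.mem_image.2 ⟨p, hp, rfl⟩), by simp⟩

theorem exists_perm {n : ℕ} (hn : 2 ≤ n) {D : Set (Fin n → ℚ)} (hD : MRSet n D)
    (σ : Equiv.Perm (Fin n)) :
    ∃ h : Equiv.Perm ↥D, ∀ i (a b : ↥D), a.1 (σ i) < b.1 (σ i) ↔ (h a).1 i < (h b).1 i := by
  classical
  let P := {f : Finset (↥D × ↥D) // Good σ f}
  letI : Encodable ↥D := Encodable.ofCountable _
  let cof : ↥D ⊕ ↥D → Order.Cofinal P := fun x => match x with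
    | Sum.inl a => 
      { carrier := {f | ∃ b, (a, b) ∈ f.1}
        isCofinal := fun f => by
          obtain ⟨g, hg, hfg, h⟩ := ext_fwd hD σ f.1 f.2 a
          exact ⟨⟨g, hg⟩, h, hfg⟩ }
    | Sum.inr b =>
      { carrier := {f | ∃ a, (a, b) ∈ f.1}
        isCofinal := fun f => by
          obtain ⟨g, hg, hfg, h⟩ := ext_bwd hD σ f.1 f.2 b
          exact ⟨⟨g, hg⟩, h, hfg⟩ }
  let I : Order.Ideal P := Order.idealOfCofinals ⟨∅, by intro p hp; simp at hp⟩ cof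
  have hF : ∀ a : ↥D, ∃ b : ↥D, ∃ f ∈ I, (a, b) ∈ f.1 := by
    intro a
    obtain ⟨f, ⟨b, hb⟩, hf⟩ := Order.cofinal_meets_idealOfCofinals ⟨∅, by intro p hp; simp at hp⟩ cof (Sum.inl a)
    exact ⟨b, f, hf, hb⟩
  have hG : ∀ b : ↥D, ∃ a : ↥D, ∃ f ∈ I, (a, b) ∈ f.1 := by
    intro b
    obtain ⟨f, ⟨a, ha⟩, hf⟩ := Order.cofinal_meets_idealOfCofinals ⟨∅, by intro p hp; simp at hp⟩ cof (Sum.inr b)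
    exact ⟨a, f, hf, ha⟩
  have comp : ∀ a b a' b' : ↥D, (∃ f ∈ I, (a, b) ∈ f.1) → (∃ f ∈ I, (a', b') ∈ f.1) →
      ∀ i, a.1 (σ i) < a'.1 (σ i) ↔ b.1 i < b'.1 i := by
    rintro a b a' b' ⟨f, hf, h1⟩ ⟨g, hg, h2⟩ i
    obtain ⟨k, hk, hfk, hgk⟩ := I.directed f hf g hg
    exact k.2 _ (hfk h1) _ (hgk h2) i
  have z : Fin n := ⟨0, by omega⟩
  choose F hF using hF
  choose G hG using hG
  have eq_of : ∀ (a b : ↥D) (i : Fin n), ¬ a.1 i < b.1 i → ¬ b.1 i < a.1 i → a = b := by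
    intro a b i h1 h2
    by_contra h
    rcases lt_or_gt_of_ne (coord_ne hD h i) with h | h
    · exact h1 h
    · exact h2 h
  refine ⟨⟨F, G, fun a => ?_, fun b => ?_⟩, fun i a b => comp _ _ _ _ (hF a) (hF b) i⟩
  · refine eq_of _ _ (σ z) ?_ ?_
    · rw [comp _ _ _ _ (hG (F a)) (hF a) z]; exact lt_irrefl _
    · rw [comp _ _ _ _ (hF a) (hG (F a)) z]; exact lt_irrefl _
  · refine eq_of _ _ z ?_ ?_
    · rw [← comp _ _ _ _ (hF (G b)) (hG b) z]; exact lt_irrefl _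
    · rw [← comp _ _ _ _ (hG b) (hF (G b)) z]; exact lt_irrefl _

/-! Rigidity of realizers -/

def Typ {n : ℕ} {D : Set (Fin n → ℚ)} (i : Fin n) (a b : ↥D) : Prop :=
  b.1 i < a.1 i ∧ ∀ j, j ≠ i → a.1 j < b.1 j

section
variable {n : ℕ} {D : Set (Fin n → ℚ)} {R : Fin n → ↥D → ↥D → Prop}

theorem exists_rev (hn : 2 ≤ n) (hD : MRSet n D) (hR : IsRealizer n D R) {i : Fin n} {a b : ↥D}
    (h : b.1 i < a.1 i) : ∃ k, R k b a := by
  by_contra hc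
  push Not at hc
  have : ∀ k, R k a b := by
    intro k
    haveI := hR.1 k
    rcases trichotomous_of (R k) a b with h' | h' | h'
    · exact h'
    · subst h'; exact absurd h (lt_irrefl _)
    · exact absurd h' (hc k)
  exact absurd (((prodLt_iff hn hD a b).1 ((hR.2 a b).2 this)) i) h.not_gt

theorem real_lt (hn : 2 ≤ n) (hD : MRSet n D) (hR : IsRealizer n D R) {a b : ↥D}
    (h : ∀ i, a.1 i < b.1 i) (k : Fin n) : R k a b :=
  (hR.2 a b).1 ((prodLt_iff hn hD a b).2 h) k

theorem no_share (hn : 2 ≤ n) (hD : MRSet n D) (hR : IsRealizer n D R) {a b c d : ↥D}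
    {k : Fin n} (h1 : R k b a) (h2 : R k d c) (h3 : ∀ i, a.1 i < d.1 i)
    (h4 : ∀ i, c.1 i < b.1 i) : False := by
  haveI := hR.1 k
  have h3 := real_lt hn hD hR h3 k
  have h4 := real_lt hn hD hR h4 k
  exact irrefl_of (R k) b (trans_of (R k) (trans_of (R k) (trans_of (R k) h1 h3) h2) h4)

theorem family (hn : 2 ≤ n) (hD : MRSet n D) (hR : IsRealizer n D R) {i : Fin n}
    {a b a' b' : ↥D} {k k' : Fin n} 
    (hov1 : ∀ j, j ≠ i → a.1 j < b.1 j) (hov2 : ∀ j, j ≠ i → a.1 j < b'.1 j)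
    (hov3 : ∀ j, j ≠ i → a'.1 j < b.1 j) (hov4 : ∀ j, j ≠ i → a'.1 j < b'.1 j)
    (h1 : R k b a) (h2 : R k' b' a') :
    k = k' ∧ ∀ j, j ≠ i → ∃ c d : ↥D, ∃ m, Typ j c d ∧ R m d c ∧ m ≠ k := by
  let lo : Fin n → ℚ := fun j => max (a.1 j) (a'.1 j)
  let hi : Fin n → ℚ := fun j => min (b.1 j) (b'.1 j)
  let mn : Fin n → ℚ := fun j => min (min (a.1 j) (a'.1 j)) (min (b.1 j) (b'.1 j))
  let mx : Fin n → ℚ := fun j => max (max (a.1 j) (a'.1 j)) (max (b.1 j) (b'.1 j))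
  have hlh : ∀ j, j ≠ i → lo j < hi j := fun j hj =>
    lt_min (max_lt (hov1 j hj) (hov3 j hj)) (max_lt (hov2 j hj) (hov4 j hj))
  have e1 : ∀ j, mn j ≤ a.1 j := fun j => (min_le_left _ _).trans (min_le_left _ _)
  have e2 : ∀ j, mn j ≤ b.1 j := fun j => (min_le_right _ _).trans (min_le_left _ _)
  have e3 : ∀ j, mn j ≤ b'.1 j := fun j => (min_le_right _ _).trans (min_le_right _ _)
  have e4 : ∀ j, a.1 j ≤ mx j := fun j => (le_max_left _ _).trans (le_max_left _ _)
  have e5 : ∀ j, a'.1 j ≤ mx j := fun j => (le_max_right _ _).trans (le_max_left _ _)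
  have e6 : ∀ j, b.1 j ≤ mx j := fun j => (le_max_left _ _).trans (le_max_right _ _)
  have l1 : ∀ j, a.1 j ≤ lo j := fun j => le_max_left _ _
  have l2 : ∀ j, a'.1 j ≤ lo j := fun j => le_max_right _ _
  have l3 : ∀ j, hi j ≤ b.1 j := fun j => min_le_left _ _
  have l4 : ∀ j, hi j ≤ b'.1 j := fun j => min_le_right _ _
  clear_value lo hi mn mx
  have key : ∀ j, ∃ c d : ↥D, j ≠ i → (lo j < d.1 j ∧ d.1 j < c.1 j ∧ c.1 j < hi j ∧
      ∀ l, l ≠ j → c.1 l < mn l ∧ mx l < d.1 l) := by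
    intro j
    by_cases hj : j = i
    · exact ⟨a, a, fun h => absurd hj h⟩
    have hj' := hlh j hj
    obtain ⟨c, hc⟩ := box hD (fun l => if l = j then (lo j + hi j) / 2 else mn l - 1)
      (fun l => if l = j then hi j else mn l) (by
        intro l
        split_ifs <;> linarith)
    obtain ⟨d, hd⟩ := box hD (fun l => if l = j then lo j else mx l)
      (fun l => if l = j then (lo j + hi j) / 2 else mx l + 1) (by
        intro l
        split_ifs <;> linarith)
    refine ⟨c, d, fun _ => ?_⟩
    have hcj := hc j
    have hdj := hd j
    simp only [if_true] at hcj hdj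
    refine ⟨hdj.1, hdj.2.trans hcj.1, hcj.2, fun l hl => ?_⟩
    have hcl := hc l
    have hdl := hd l
    simp only [if_neg hl] at hcl hdl
    exact ⟨hcl.2, hdl.1⟩
  choose c d hcd using key
  have hrev : ∀ j, ∃ m, (j = i → m = k) ∧ (j ≠ i → R m (d j) (c j)) := by
    intro j
    by_cases hj : j = i
    · exact ⟨k, fun _ => rfl, fun h => absurd hj h⟩
    · obtain ⟨m, hm⟩ := exists_rev hn hD hR (hcd j hj).2.1
      exact ⟨m, fun h => absurd h hj, fun _ => hm⟩
  choose f hfi hfj using hrev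
  have ha : ∀ j, j ≠ i → ∀ l, a.1 l < (d j).1 l := by
    intro j hj l
    obtain ⟨q1, q2, q3, q4⟩ := hcd j hj
    by_cases hl : l = j
    · subst hl; exact (l1 l).trans_lt q1
    · exact (e4 l).trans_lt (q4 l hl).2
  have ha' : ∀ j, j ≠ i → ∀ l, a'.1 l < (d j).1 l := by
    intro j hj l
    obtain ⟨q1, q2, q3, q4⟩ := hcd j hj
    by_cases hl : l = j
    · subst hl; exact (l2 l).trans_lt q1
    · exact (e5 l).trans_lt (q4 l hl).2
  have hb : ∀ j, j ≠ i → ∀ l, (c j).1 l < b.1 l := by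
    intro j hj l
    obtain ⟨q1, q2, q3, q4⟩ := hcd j hj
    by_cases hl : l = j
    · subst hl; exact q3.trans_le (l3 l)
    · exact (q4 l hl).1.trans_le (e2 l)
  have hb' : ∀ j, j ≠ i → ∀ l, (c j).1 l < b'.1 l := by
    intro j hj l
    obtain ⟨q1, q2, q3, q4⟩ := hcd j hj
    by_cases hl : l = j
    · subst hl; exact q3.trans_le (l4 l)
    · exact (q4 l hl).1.trans_le (e3 l)
  have hcc : ∀ j, j ≠ i → ∀ j', j' ≠ i → j ≠ j' → ∀ l, (c j).1 l < (d j').1 l := by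
    intro j hj j' hj' hjj l
    by_cases hl : l = j
    · have := ((hcd j' hj').2.2.2 l (by rw [hl]; exact hjj)).2
      exact (hb j hj l).trans ((e6 l).trans_lt this)
    · exact ((hcd j hj).2.2.2 l hl).1.trans ((e1 l).trans_lt (ha j' hj' l))
  have hk : ∀ j, j ≠ i → f j ≠ k := by
    intro j hj h
    exact no_share hn hD hR h1 (h ▸ hfj j hj) (ha j hj) (hb j hj)
  have hk' : ∀ j, j ≠ i → f j ≠ k' := by
    intro j hj h
    exact no_share hn hD hR h2 (h ▸ hfj j hj) (ha' j hj) (hb' j hj)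
  have hinj : Function.Injective f := by
    intro j j' h
    by_contra hne
    by_cases hj : j = i
    · have hj' : j' ≠ i := fun h' => hne (hj.trans h'.symm)
      exact hk j' hj' (h ▸ hfi j hj)
    · by_cases hj' : j' = i
      · exact hk j hj (h.trans (hfi j' hj'))
      · exact no_share hn hD hR (hfj j hj) (h ▸ hfj j' hj') (hcc j hj j' hj' hne)
          (hcc j' hj' j hj (Ne.symm hne))
  obtain ⟨j, hj⟩ := (Finite.injective_iff_surjective.1 hinj) k'
  constructor
  · by_cases hji : j = i
    · rw [← hj, hfi j hji]
    · exact absurd hj (hk' j hji)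
  · intro j hj
    obtain ⟨q1, q2, q3, q4⟩ := hcd j hj
    refine ⟨c j, d j, f j, ⟨q2, fun l hl => ?_⟩, hfj j hj, hk j hj⟩
    exact (q4 l hl).1.trans ((e1 l).trans_lt (ha j hj l))

theorem rev_unique (hn : 2 ≤ n) (hD : MRSet n D) (hR : IsRealizer n D R) {i : Fin n}
    {a b a' b' : ↥D} {k k' : Fin n} (hab : Typ i a b) (hab' : Typ i a' b')
    (h1 : R k b a) (h2 : R k' b' a') : k = k' := by
  let mn : Fin n → ℚ := fun j => min (b.1 j) (b'.1 j)
  let mx : Fin n → ℚ := fun j => max (a.1 j) (a'.1 j)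
  have m1 : ∀ j, mn j ≤ b.1 j := fun j => min_le_left _ _
  have m2 : ∀ j, mn j ≤ b'.1 j := fun j => min_le_right _ _
  have m3 : ∀ j, a.1 j ≤ mx j := fun j => le_max_left _ _
  have m4 : ∀ j, a'.1 j ≤ mx j := fun j => le_max_right _ _
  clear_value mn mx
  obtain ⟨c, hc⟩ := box hD (fun l => if l = i then 0 else min (mn l) (mx l) - 1)
      (fun l => if l = i then 1 else min (mn l) (mx l)) (by
        intro l
        split_ifs <;> linarith)
  obtain ⟨d, hd⟩ := box hD (fun l => if l = i then -1 else mx l)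
      (fun l => if l = i then 0 else mx l + 1) (by
        intro l
        split_ifs <;> linarith)
  have hci := hc i
  have hdi := hd i
  simp only [if_true] at hci hdi
  have hc' : ∀ l, l ≠ i → c.1 l < mn l ∧ c.1 l < mx l := by
    intro l hl
    have := hc l
    simp only [if_neg hl] at this
    exact ⟨this.2.trans_le (min_le_left _ _), this.2.trans_le (min_le_right _ _)⟩
  have hd' : ∀ l, l ≠ i → mx l < d.1 l := by
    intro l hl
    have := hd l
    simp only [if_neg hl] at this
    exact this.1
  obtain ⟨m, hm⟩ := exists_rev hn hD hR (hdi.2.trans hci.1)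
  have hcd : ∀ j, j ≠ i → c.1 j < d.1 j := fun j hj => (hc' j hj).2.trans (hd' j hj)
  have A := (family hn hD hR (i := i) hab.2 (fun j hj => (m3 j).trans_lt (hd' j hj))
    (fun j hj => (hc' j hj).1.trans_le (m1 j)) hcd h1 hm).1
  have B := (family hn hD hR (i := i) hab'.2 (fun j hj => (m4 j).trans_lt (hd' j hj))
    (fun j hj => (hc' j hj).1.trans_le (m2 j)) hcd h2 hm).1
  exact A.trans B.symm

theorem rigid (hn : 2 ≤ n) (hD : MRSet n D) (hR : IsRealizer n D R) :
    ∃ τ : Equiv.Perm (Fin n), ∀ i (a b : ↥D), R (τ i) a b ↔ a.1 i < b.1 i := by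
  have ex : ∀ i : Fin n, ∃ k, ∃ a b : ↥D, Typ i a b ∧ R k b a := by
    intro i
    obtain ⟨c, hc⟩ := box hD (fun l => if l = i then 0 else -1)
      (fun l => if l = i then 1 else 0) (by
        intro l
        split_ifs <;> norm_num)
    obtain ⟨d, hd⟩ := box hD (fun l => if l = i then -1 else 0)
      (fun l => if l = i then 0 else 1) (by
        intro l
        split_ifs <;> norm_num)
    have hci := hc i
    have hdi := hd i
    simp only [if_true] at hci hdi
    have h1 : d.1 i < c.1 i := hdi.2.trans hci.1
    obtain ⟨m, hm⟩ := exists_rev hn hD hR h1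
    refine ⟨m, c, d, ⟨h1, fun l hl => ?_⟩, hm⟩
    have hcl := hc l
    have hdl := hd l
    simp only [if_neg hl] at hcl hdl
    exact hcl.2.trans hdl.1
  choose τ A B hT hRev using ex
  have hrev : ∀ i (a b : ↥D), Typ i a b → R (τ i) b a := by
    intro i a b hab
    obtain ⟨m, hm⟩ := exists_rev hn hD hR hab.1
    rwa [← rev_unique hn hD hR hab (hT i) hm (hRev i)]
  have hinj : Function.Injective τ := by
    intro i j hij
    by_contra hne
    obtain ⟨c, d, m, hcd, hm, hmk⟩ := (family hn hD hR (i := i) (hT i).2 (hT i).2 (hT i).2 (hT i).2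
      (hRev i) (hRev i)).2 j (Ne.symm hne)
    exact hmk ((rev_unique hn hD hR hcd (hT j) hm (hRev j)).trans hij.symm)
  have main : ∀ i (a b : ↥D), a.1 i < b.1 i → R (τ i) a b := by
    intro i a b hab
    obtain ⟨c, hc⟩ := box hD (fun l => if l = i then a.1 i else max (a.1 l) (b.1 l))
      (fun l => if l = i then b.1 i else max (a.1 l) (b.1 l) + 1) (by
        intro l
        split_ifs <;> linarith)
    have hci := hc i
    simp only [if_true] at hci
    have hcl : ∀ l, l ≠ i → a.1 l < c.1 l ∧ b.1 l < c.1 l := by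
      intro l hl
      have := hc l
      simp only [if_neg hl] at this
      exact ⟨(le_max_left _ _).trans_lt this.1, (le_max_right _ _).trans_lt this.1⟩
    haveI := hR.1 (τ i)
    refine trans_of (R (τ i)) (b := c) (real_lt hn hD hR ?_ _)
      (hrev i b c ⟨hci.2, fun l hl => (hcl l hl).2⟩)
    intro l
    by_cases hl : l = i
    · rw [hl]; exact hci.1
    · exact (hcl l hl).1
  refine ⟨Equiv.ofBijective τ (Finite.injective_iff_bijective.1 hinj), fun i a b => ⟨?_, main i a b⟩⟩
  intro h
  change R (τ i) a b at h
  haveI := hR.1 (τ i)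
  by_contra hc
  by_cases hab : a = b
  · subst hab; exact irrefl_of (R (τ i)) _ h
  · have := main i b a (lt_of_le_of_ne (not_lt.1 hc) (coord_ne hD (Ne.symm hab) i))
    exact irrefl_of (R (τ i)) _ (trans_of (R (τ i)) h this)

theorem part3 (hn : 2 ≤ n) (hD : MRSet n D) (hR : IsRealizer n D R) :
    ∃ g : Equiv.Perm ↥D, PresProd n D g ∧
        ∀ (i : Fin n) (a b : ↥D),
          R i a b ↔ (g⁻¹ a : Fin n → ℚ) i < (g⁻¹ b : Fin n → ℚ) i := by
  obtain ⟨τ, hτ⟩ := rigid hn hD hR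
  obtain ⟨h, hh⟩ := exists_perm hn hD τ.symm
  have key : ∀ (i : Fin n) (a b : ↥D), R i a b ↔ (h a).1 i < (h b).1 i := by
    intro i a b
    rw [← hh, ← hτ, Equiv.apply_symm_apply]
  refine ⟨h⁻¹, ?_, by simpa using key⟩
  intro a b
  rw [hR.2 (h⁻¹ a) (h⁻¹ b), prodLt_iff hn hD]
  refine forall_congr' fun i => ?_
  rw [key]
  simp

end

theorem pres_inv {n : ℕ} {D : Set (Fin n → ℚ)} {g : Equiv.Perm ↥D} (hg : PresProd n D g) :
    PresProd n D g⁻¹ := by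
  intro a b
  rw [hg (g⁻¹ a) (g⁻¹ b)]
  simp

end MRaux

/-- the group `Aut(D,<)` acts on the set of realizer tuples via the logic
action: the action is well-defined, transitive, and in particular every realizer tuple is
the image of the tuple of coordinate orders under some automorphism. -/
theorem stmt_18 (n : ℕ) (hn : 2 ≤ n) (D : Set (Fin n → ℚ)) (hD : MRSet n D) :
    (∀ g : Equiv.Perm ↥D, PresProd n D g →
      ∀ R : Fin n → ↥D → ↥D → Prop, IsRealizer n D R →
        IsRealizer n D (fun i a b => R i (g⁻¹ a) (g⁻¹ b))) ∧
    (∀ R R' : Fin n → ↥D → ↥D → Prop, IsRealizer n D R → IsRealizer n D R' →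
      ∃ g : Equiv.Perm ↥D, PresProd n D g ∧
        ∀ (i : Fin n) (a b : ↥D), R' i a b ↔ R i (g⁻¹ a) (g⁻¹ b)) ∧
    (∀ R : Fin n → ↥D → ↥D → Prop, IsRealizer n D R →
      ∃ g : Equiv.Perm ↥D, PresProd n D g ∧
        ∀ (i : Fin n) (a b : ↥D),
          R i a b ↔ (g⁻¹ a : Fin n → ℚ) i < (g⁻¹ b : Fin n → ℚ) i) := by
  refine ⟨?_, ?_, fun R hR => MRaux.part3 hn hD hR⟩
  · intro g hg R hR
    refine ⟨fun i => ?_, fun a b => ?_⟩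
    · haveI := hR.1 i
      exact { trichotomous := fun a b h1 h2 => by
                rcases trichotomous_of (R i) (g⁻¹ a) (g⁻¹ b) with h | h | h
                · exact absurd h h1
                · exact g⁻¹.injective h
                · exact absurd h h2
              irrefl := fun a => irrefl_of (R i) _
              trans := fun a b c => trans_of (R i) }
    · rw [MRaux.pres_inv hg a b]
      exact hR.2 _ _
  · intro R R' hR hR'
    obtain ⟨g, hg, h⟩ := MRaux.part3 hn hD hR
    obtain ⟨g', hg', h'⟩ := MRaux.part3 hn hD hR'
    refine ⟨g' * g⁻¹, fun a b => ?_, fun i a b => ?_⟩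
    · rw [MRaux.pres_inv hg a b, hg' (g⁻¹ a) (g⁻¹ b)]
      rfl
    · rw [h, h']
      simp [mul_inv_rev]
end
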